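/- arXiv:math/0602508 — 6 statements merged into one kernel-verified Lean document; each statement's English description precedes it below -/
import Mathlib

section
/- Let G be a finite group admitting a surjective group homomorphism π from a free group F (on any set) onto G whose kernel is the normal closure in F of a subset of cardinality r. Then for every prime p and every F_pG-module M that is finite-dimensional over F_p, one has dim_{F_p} H²(G, M) ≤ r · dim_{F_p} M. -/
/-- The underlying set of the extension attached to a 2-cocycle. -/
@[ext] structure CocycleExt {k G M : Type} [CommRing k] [Group G] [AddCommGroup M] [Module k M]
    (ρ : Representation k G M) (z : G × G → M) where
  fst : M
  snd : G

namespace CocycleExt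

variable {k G M : Type} [CommRing k] [Group G] [AddCommGroup M] [Module k M]

/-- The cocycle condition. -/
def IsCoc (ρ : Representation k G M) (z : G × G → M) : Prop :=
  ∀ g h j : G, z (g * h, j) + z (g, h) = ρ g (z (h, j)) + z (g, h * j)

/-- The group structure on the extension. -/
@[reducible] def grp {ρ : Representation k G M} {z : G × G → M} (hz : IsCoc ρ z) :
    Group (CocycleExt ρ z) :=
  letI : Mul (CocycleExt ρ z) := ⟨fun a b => ⟨a.1 + ρ a.2 b.1 + z (a.2, b.2), a.2 * b.2⟩⟩
  letI : One (CocycleExt ρ z) := ⟨⟨-z (1, 1), 1⟩⟩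
  letI : Inv (CocycleExt ρ z) :=
    ⟨fun a => ⟨-z (1, 1) - ρ a.2⁻¹ a.1 - z (a.2⁻¹, a.2), a.2⁻¹⟩⟩
  Group.ofLeftAxioms
    (by
      rintro ⟨a, g⟩ ⟨b, h⟩ ⟨c, j⟩
      have := hz g h j
      refine CocycleExt.ext ?_ (mul_assoc g h j)
      change (a + ρ g b + z (g, h)) + ρ (g * h) c + z (g * h, j)
        = a + ρ g (b + ρ h c + z (h, j)) + z (g, h * j)
      rw [map_mul, map_add, map_add, Module.End.mul_apply]
      have h2 : z (g * h, j) = ρ g (z (h, j)) + z (g, h * j) - z (g, h) := by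
        rw [← this]; abel
      rw [h2]; abel)
    (by
      rintro ⟨a, g⟩
      have := hz 1 1 g
      refine CocycleExt.ext ?_ (one_mul g)
      change -z (1, 1) + ρ 1 a + z (1, g) = a
      simp only [map_one, Module.End.one_apply, one_mul] at this ⊢
      have h2 := add_left_cancel this
      rw [h2]; abel)
    (by
      rintro ⟨a, g⟩
      refine CocycleExt.ext ?_ (inv_mul_cancel g)
      change -z (1, 1) - ρ g⁻¹ a - z (g⁻¹, g) + ρ g⁻¹ a + z (g⁻¹, g) = -z (1, 1)
      abel)

/-- The pullback of a cocycle to a free group is a coboundary. -/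
theorem exists_free {ρ : Representation k G M} {z : G × G → M} (hz : IsCoc ρ z)
    {α : Type} (π : FreeGroup α →* G) :
    ∃ φ : FreeGroup α → M, ∀ x y, φ (x * y) = φ x + ρ (π x) (φ y) + z (π x, π y) := by
  letI := grp hz
  let f : FreeGroup α →* CocycleExt ρ z := FreeGroup.lift fun a => ⟨0, π (FreeGroup.of a)⟩
  let q : CocycleExt ρ z →* G := ⟨⟨fun a => a.2, rfl⟩, fun _ _ => rfl⟩
  have hq : q.comp f = π := by
    ext a
    simp [f, q]
  have hq' : ∀ x, (f x).2 = π x := fun x => DFunLike.congr_fun hq x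
  refine ⟨fun x => (f x).1, fun x y => ?_⟩
  have h : (f x * f y).1 = (f x).1 + ρ (f x).2 (f y).1 + z ((f x).2, (f y).2) := rfl
  simp only [map_mul]
  rw [h, hq', hq']

theorem cobound {ρ : Representation k G M} {z : G × G → M} (hz : IsCoc ρ z)
    {α : Type} (π : FreeGroup α →* G) (hπ : Function.Surjective π)
    (S : Set (FreeGroup α)) (hker : π.ker = Subgroup.normalClosure S)
    (φ : FreeGroup α → M) (hφ : ∀ x y, φ (x * y) = φ x + ρ (π x) (φ y) + z (π x, π y))
    (hS : ∀ s ∈ S, φ s + z (1, 1) = 0) :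
    ∃ ψ : G → M, ∀ g h, ψ (g * h) = ψ g + ρ g (ψ h) + z (g, h) := by
  letI := grp hz
  let f : FreeGroup α →* CocycleExt ρ z :=
    MonoidHom.mk' (fun x => ⟨φ x, π x⟩) fun x y => CocycleExt.ext (hφ x y) (map_mul π x y)
  have hle : π.ker ≤ f.ker := by
    rw [hker]
    refine Subgroup.normalClosure_le_normal fun s hs => ?_
    have h1 : s ∈ π.ker := hker ▸ Subgroup.subset_normalClosure hs
    exact MonoidHom.mem_ker.2
      (CocycleExt.ext (eq_neg_of_add_eq_zero_left (hS s hs)) (MonoidHom.mem_ker.1 h1))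
  have hwd : ∀ x y, π x = π y → φ x = φ y := fun x y h => by
    have h1 : x⁻¹ * y ∈ f.ker := hle (by simp [MonoidHom.mem_ker, h])
    have h2 : f x = f y := by
      rw [MonoidHom.mem_ker, map_mul, map_inv, inv_mul_eq_one] at h1
      exact h1
    exact congrArg CocycleExt.fst h2
  choose σ hσ using hπ
  refine ⟨fun g => φ (σ g), fun g h => ?_⟩
  have := hφ (σ g) (σ h)
  rw [hσ, hσ] at this
  rw [← this]
  exact hwd _ _ (by simp [hσ])

end CocycleExt

/-- If a finite group `G` has a presentation (as the quotient of a free group by the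
normal closure of a set of `r` relators), then `dim H²(G,M) ≤ r · dim M` for every prime
`p` and every finite-dimensional `𝔽_p G`-module `M`. -/
theorem dim_H2_le_of_presentation
    (G : Type) [Group G] [Finite G] (α : Type) (π : FreeGroup α →* G)
    (hπ : Function.Surjective π) (r : ℕ) (S : Finset (FreeGroup α)) (hS : S.card = r)
    (hker : π.ker = Subgroup.normalClosure (S : Set (FreeGroup α)))
    (p : ℕ) (hp : p.Prime)
    (M : Type) [AddCommGroup M] [Module (ZMod p) M] [Module.Finite (ZMod p) M]
    (ρ : Representation (ZMod p) G M) :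
    Module.finrank (ZMod p) (groupCohomology (Rep.of ρ) 2) ≤
      r * Module.finrank (ZMod p) M := by
  haveI : Fact p.Prime := ⟨hp⟩
  let Z : Submodule (ZMod p) (G × G → M) := groupCohomology.cocycles₂ (Rep.of ρ)
  have hZ : ∀ z : Z, CocycleExt.IsCoc ρ z.1 := fun z =>
    (groupCohomology.mem_cocycles₂_iff (A := Rep.of ρ) z.1).1 z.2
  let P : Representation (ZMod p) G (Z →ₗ[ZMod p] M) :=
    { toFun := fun g =>
        { toFun := fun l => (ρ g).comp l
          map_add' := fun a b => by ext; simp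
          map_smul' := fun a b => by ext; simp }
      map_one' := by ext; simp
      map_mul' := fun a b => by ext; simp }
  let u : G × G → (Z →ₗ[ZMod p] M) := fun x => (LinearMap.proj x).comp Z.subtype
  have hu : CocycleExt.IsCoc P u := fun g h j => LinearMap.ext fun z => hZ z g h j
  obtain ⟨φ, hφ⟩ := CocycleExt.exists_free hu π
  let L : Z →ₗ[ZMod p] (S → M) := LinearMap.pi fun s => φ s.1 + u (1, 1)
  let Q : Z →ₗ[ZMod p] groupCohomology (Rep.of ρ) 2 := (groupCohomology.H2π (Rep.of ρ)).hom
  have hQ : Function.Surjective Q := fun x => by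
    induction x using groupCohomology.H2_induction_on with
    | h y => exact ⟨y, rfl⟩
  have hLQ : LinearMap.ker L ≤ LinearMap.ker Q := fun z hz => by
    have hz' : L z = 0 := hz
    obtain ⟨ψ, hψ⟩ := CocycleExt.cobound (hZ z) π hπ S hker (fun x => φ x z)
      (fun x y => congrArg (fun l : Z →ₗ[ZMod p] M => l z) (hφ x y))
      (fun s hs => congrFun hz' ⟨s, hs⟩)
    refine LinearMap.mem_ker.2 ((groupCohomology.H2π_eq_zero_iff (A := Rep.of ρ) z).2 ?_)
    refine ⟨fun g => -ψ g, funext fun x => ?_⟩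
    change ρ x.1 (-ψ x.2) - -ψ (x.1 * x.2) + -ψ x.1 = z.1 (x.1, x.2)
    rw [hψ, map_neg]
    abel
  have e1 : Module.finrank (ZMod p) (groupCohomology (Rep.of ρ) 2)
      ≤ Module.finrank (ZMod p) (Z ⧸ LinearMap.ker L) := by
    refine LinearMap.finrank_le_finrank_of_surjective
      (f := (LinearMap.ker L).liftQ Q hLQ) ?_
    intro x
    obtain ⟨y, rfl⟩ := hQ x
    exact ⟨Submodule.Quotient.mk y, rfl⟩
  have e2 := L.quotKerEquivRange.finrank_eq
  have e3 := Submodule.finrank_le (LinearMap.range L)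
  have e4 : Module.finrank (ZMod p) (S → M) = r * Module.finrank (ZMod p) M := by
    rw [Module.finrank_pi_fintype]; simp [hS]
  omega
end

section
/- Let G be a finite group generated by a finite subset D, and suppose G has a presentation with generator set X and finite relator set R. Then there is a surjective group homomorphism π from the free group on a set D′ with |D′| = |D| onto G, mapping the free basis D′ bijectively onto D, whose kernel is the normal closure of a set of at most |D| + |R| elements. In particular, G has a presentation with d(G) generators and at most d(G) + |R| relations, where d(G) is the minimum number of generators of G. -/
theorem pres_aux {G : Type} [Group G] {X : Type} (π : FreeGroup X →* G)
    (hπ : Function.Surjective π) (R : Finset (FreeGroup X))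
    (hker : π.ker = Subgroup.normalClosure (R : Set (FreeGroup X)))
    {I : Type} [Fintype I] (p : FreeGroup I →* G) (hp : Function.Surjective p) :
    ∃ R' : Finset (FreeGroup I), R'.card ≤ Fintype.card I + R.card ∧
      p.ker = Subgroup.normalClosure (R' : Set (FreeGroup I)) := by
  classical
  choose w hw using fun i : I => hπ (p (FreeGroup.of i))
  choose v hv using fun x : X => hp (π (FreeGroup.of x))
  let φ : FreeGroup X →* FreeGroup I := FreeGroup.lift v
  let ψ : FreeGroup I →* FreeGroup X := FreeGroup.lift w
  have hφ : p.comp φ = π := by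
    ext x
    simp [φ, hv]
  have hψ : π.comp ψ = p := by
    ext x
    simp [ψ, hw]
  have hφ' : ∀ y, p (φ y) = π y := fun y => DFunLike.congr_fun hφ y
  have hψ' : ∀ y, π (ψ y) = p y := fun y => DFunLike.congr_fun hψ y
  let A : Finset (FreeGroup I) :=
    Finset.univ.image fun i : I => (FreeGroup.of i)⁻¹ * φ (ψ (FreeGroup.of i))
  refine ⟨A ∪ R.image φ, ?_, ?_⟩
  · refine (Finset.card_union_le _ _).trans (add_le_add ?_ Finset.card_image_le)
    exact Finset.card_image_le
  · apply le_antisymm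
    · intro y hy
      set N := Subgroup.normalClosure ((A ∪ R.image φ : Finset (FreeGroup I)) :
        Set (FreeGroup I)) with hN
      have h1 : (QuotientGroup.mk' N).comp (φ.comp ψ) = QuotientGroup.mk' N := by
        ext i
        refine (QuotientGroup.eq.2 ?_).symm
        apply Subgroup.subset_normalClosure
        rw [Finset.mem_coe, Finset.mem_union]
        exact Or.inl (Finset.mem_image_of_mem _ (Finset.mem_univ i))
      have h2 : Subgroup.normalClosure (R : Set (FreeGroup X)) ≤ N.comap φ := by
        apply Subgroup.normalClosure_le_normal
        intro r hr
        apply Subgroup.subset_normalClosure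
        rw [Finset.mem_coe, Finset.mem_union]
        exact Or.inr (Finset.mem_image_of_mem _ hr)
      have h3 : ψ y ∈ N.comap φ := by
        apply h2
        rw [← hker, MonoidHom.mem_ker, hψ']
        exact hy
      have h4 := DFunLike.congr_fun h1 y
      rw [← QuotientGroup.eq_one_iff]
      refine h4.symm.trans ?_
      exact (QuotientGroup.eq_one_iff _).2 h3
    · apply Subgroup.normalClosure_le_normal
      intro r hr
      rw [Finset.mem_coe, Finset.mem_union] at hr
      change p r = 1
      rcases hr with hr | hr
      · obtain ⟨i, -, rfl⟩ := Finset.mem_image.1 hr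
        simp only [map_mul, map_inv, hφ', hψ', inv_mul_cancel]
      · obtain ⟨x, hx, rfl⟩ := Finset.mem_image.1 hr
        rw [hφ']
        have : x ∈ π.ker := by
          rw [hker]
          exact Subgroup.subset_normalClosure hx
        exact this

theorem pres_surj {G : Type} [Group G] {I : Type} (f : I → G)
    (h : Subgroup.closure (Set.range f) = ⊤) : Function.Surjective (FreeGroup.lift f) := by
  rw [← MonoidHom.range_eq_top, FreeGroup.range_lift_eq_closure, h]

/-- If a finite group `G` is generated by a finite subset `D` and has a presentation with
generator set `X` and finite relator set `R`, then `G` has a presentation on the free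
group over `D` (mapping the free basis identically onto `D`) whose kernel is the normal
closure of at most `|D| + |R|` elements.  In particular, `G` has a presentation with
`d(G)` generators and at most `d(G) + |R|` relations. -/
theorem presentation_on_given_generators
    (G : Type) [Group G] [Finite G] (D : Finset G)
    (hD : Subgroup.closure (D : Set G) = ⊤)
    (X : Type) (π : FreeGroup X →* G) (hπ : Function.Surjective π)
    (R : Finset (FreeGroup X))
    (hker : π.ker = Subgroup.normalClosure (R : Set (FreeGroup X))) :
    (∃ π' : FreeGroup {x : G // x ∈ D} →* G,
      (∀ d : {x : G // x ∈ D}, π' (FreeGroup.of d) = (d : G)) ∧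
      Function.Surjective π' ∧
      ∃ R' : Finset (FreeGroup {x : G // x ∈ D}),
        R'.card ≤ D.card + R.card ∧
        π'.ker = Subgroup.normalClosure (R' : Set (FreeGroup {x : G // x ∈ D}))) ∧
    (∃ π₂ : FreeGroup (Fin (Group.rank G)) →* G,
      Function.Surjective π₂ ∧
      ∃ R₂ : Finset (FreeGroup (Fin (Group.rank G))),
        R₂.card ≤ Group.rank G + R.card ∧
        π₂.ker = Subgroup.normalClosure (R₂ : Set (FreeGroup (Fin (Group.rank G))))) := by
  constructor
  · have hs : Function.Surjective (FreeGroup.lift (fun d : {x : G // x ∈ D} => (d : G))) := by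
      apply pres_surj
      rw [← hD]
      congr 1
      ext x
      simp
    refine ⟨_, fun d => by simp, hs, ?_⟩
    simpa using pres_aux π hπ R hker _ hs
  · obtain ⟨S, hS, hS'⟩ := Group.rank_spec G
    let e := S.equivFinOfCardEq hS
    have hs : Function.Surjective
        (FreeGroup.lift (fun i : Fin (Group.rank G) => ((e.symm i : S) : G))) := by
      apply pres_surj
      rw [← hS']
      congr 1
      ext x
      constructor
      · rintro ⟨i, rfl⟩
        exact (e.symm i).2
      · intro hx
        exact ⟨e ⟨x, hx⟩, by simp⟩
    refine ⟨_, hs, ?_⟩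
    simpa using pres_aux π hπ R hker _ hs
end

section
/- Suppose a group G has a presentation with finite generator set X and finite nonempty relator set R of total length L (the sum of the reduced word lengths of the elements of R). Let Ĝ be a perfect group with a central subgroup Z of prime order p such that Ĝ/Z ≅ G (i.e., there is a surjective homomorphism Ĝ → G with kernel Z contained in the center of Ĝ). Then Ĝ has a presentation with a generator set X̂ of cardinality |X| + 1 and a relator set R̂ of cardinality |X| + |R| + 1, whose total length is at most 4|X| + 2L + p|R|, and such that one of the generators in X̂ is sent by the presentation map to a generator of Z. -/
open scoped commutatorElement

/-- Word length does not increase under a map of generators. -/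
lemma aux_norm_map_le {α β : Type} [DecidableEq α] [DecidableEq β] (f : α → β)
    (w : FreeGroup α) : (FreeGroup.map f w).norm ≤ w.norm := by
  conv_lhs => rw [← FreeGroup.mk_toWord (x := w)]
  rw [FreeGroup.map.mk]
  refine FreeGroup.norm_mk_le.trans ?_
  simp [FreeGroup.norm]

lemma aux_norm_zpow_le {α : Type} [DecidableEq α] (x : α) (k : ℤ) :
    (FreeGroup.of x ^ k).norm ≤ k.natAbs := by
  obtain ⟨n, rfl | rfl⟩ := k.eq_nat_or_neg
  · simp [FreeGroup.norm_of_pow]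
  · simp [FreeGroup.norm_of_pow]

lemma aux_norm_comm_le {α : Type} [DecidableEq α] (x y : α) :
    ⁅FreeGroup.of x, FreeGroup.of y⁆.norm ≤ 4 := by
  rw [commutatorElement_def]
  have h1 := FreeGroup.norm_mul_le (FreeGroup.of x * FreeGroup.of y * (FreeGroup.of x)⁻¹)
    (FreeGroup.of y)⁻¹
  have h2 := FreeGroup.norm_mul_le (FreeGroup.of x * FreeGroup.of y) (FreeGroup.of x)⁻¹
  have h3 := FreeGroup.norm_mul_le (FreeGroup.of x) (FreeGroup.of y)
  simp only [FreeGroup.norm_inv_eq, FreeGroup.norm_of] at h1 h2 h3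
  omega

/-- The commutators `[x, z]` for distinct `x ≠ z` are nontrivial and distinct. -/
lemma aux_comm_sep {α : Type} [DecidableEq α] (x z : α) (hx : x ≠ z) :
    ∃ t : FreeGroup α →* Equiv.Perm (Fin 3),
      t ⁅FreeGroup.of x, FreeGroup.of z⁆ ≠ 1 ∧
      ∀ y, y ≠ x → y ≠ z → t ⁅FreeGroup.of y, FreeGroup.of z⁆ = 1 := by
  refine ⟨FreeGroup.lift (fun i => if i = z then Equiv.swap 0 1 else
    if i = x then Equiv.swap 1 2 else 1), ?_, ?_⟩
  · rw [map_commutatorElement]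
    simp only [FreeGroup.lift_apply_of, if_true, hx, if_false]
    decide
  · intro y h1 h2
    rw [map_commutatorElement]
    simp [h1, h2]

/-- A nontrivial perfect central extension forces at least two relators. -/
lemma aux_two_le_card
    (G : Type) [Group G] (X : Type) [DecidableEq X]
    (π : FreeGroup X →* G) (hπ : Function.Surjective π)
    (R : Finset (FreeGroup X)) (hR : R.Nonempty)
    (hker : π.ker = Subgroup.normalClosure (R : Set (FreeGroup X)))
    (Ghat : Type) [Group Ghat] (hperf : commutator Ghat = ⊤)
    (p : ℕ) (hp : p.Prime)
    (φ : Ghat →* G) (hφ : Function.Surjective φ)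
    (hcentral : φ.ker ≤ Subgroup.center Ghat)
    (hp' : Nat.card φ.ker = p) : 2 ≤ R.card := by
  by_contra hlt
  have h1 : R.card = 1 := by
    have := hR.card_pos
    omega
  obtain ⟨r, rfl⟩ := Finset.card_eq_one.mp h1
  -- every homomorphism to `ℤ` killing `r` is trivial
  have key : ∀ h : FreeGroup X →* Multiplicative ℤ, h r = 1 → h = 1 := by
    intro h hr
    have hle : π.ker ≤ h.ker := by
      rw [hker]
      apply Subgroup.normalClosure_le_normal
      simpa [MonoidHom.mem_ker] using hr
    let g : G →* Multiplicative ℤ := π.liftOfSurjective hπ ⟨h, hle⟩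
    have hg : ∀ w, g (π w) = h w := fun w =>
      MonoidHom.liftOfRightInverse_comp_apply π _ _ ⟨h, hle⟩ w
    ext w
    obtain ⟨u, hu⟩ := hφ (π (FreeGroup.of w))
    have hmem : u ∈ (g.comp φ).ker :=
      Abelianization.commutator_subset_ker (g.comp φ) (hperf ▸ Subgroup.mem_top u)
    rw [MonoidHom.mem_ker, MonoidHom.comp_apply, hu, hg] at hmem
    simp [hmem]
  have hsub : Subsingleton X := by
    refine ⟨fun x y => ?_⟩
    by_contra hxy
    let e : FreeGroup X →* Multiplicative ℤ :=
      FreeGroup.lift (fun i => if i = x then Multiplicative.ofAdd 1 else 1)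
    let f : FreeGroup X →* Multiplicative ℤ :=
      FreeGroup.lift (fun i => if i = y then Multiplicative.ofAdd 1 else 1)
    have hex : e (FreeGroup.of x) = Multiplicative.ofAdd 1 := by simp [e]
    have hey : e (FreeGroup.of y) = 1 := by simp [e, Ne.symm hxy]
    have hfx : f (FreeGroup.of x) = 1 := by simp [f, hxy]
    have hfy : f (FreeGroup.of y) = Multiplicative.ofAdd 1 := by simp [f]
    have hne : e r ≠ 1 := by
      intro h
      have := key e h
      rw [this] at hex
      have h4 := congrArg Multiplicative.toAdd hex
      simp at h4
    have h2 := key (f ^ (Multiplicative.toAdd (e r)) * (e ^ (Multiplicative.toAdd (f r)))⁻¹) (by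
      apply Multiplicative.toAdd.injective
      simp [mul_comm])
    have h3 := DFunLike.congr_fun h2 (FreeGroup.of y)
    apply hne
    apply Multiplicative.toAdd.injective
    simpa [hey, hfy] using h3
  have hcomm : ∀ a b : FreeGroup X, a * b = b * a := by
    have hc : ∀ a : FreeGroup X, ∀ x : X, a * FreeGroup.of x = FreeGroup.of x * a := by
      intro a x
      induction a using FreeGroup.induction_on with
      | C1 => simp
      | of y => rw [Subsingleton.elim y x]
      | inv_of y _ => rw [Subsingleton.elim y x]; simp
      | mul a b ha hb => rw [mul_assoc, hb, ← mul_assoc, ha, mul_assoc]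
    intro a b
    induction b using FreeGroup.induction_on with
    | C1 => simp
    | of y => exact hc a y
    | inv_of y _ => exact (Commute.inv_right (hc a y))
    | mul b c hb hc => rw [← mul_assoc, hb, mul_assoc, hc, mul_assoc]
  have hkt : φ.ker = ⊤ := by
    rw [eq_top_iff, ← hperf, commutator_def, Subgroup.commutator_le]
    intro a _ b _
    rw [MonoidHom.mem_ker, map_commutatorElement, commutatorElement_eq_one_iff_mul_comm]
    obtain ⟨u, hu⟩ := hπ (φ a)
    obtain ⟨v, hv⟩ := hπ (φ b)
    rw [← hu, ← hv, ← map_mul, hcomm, map_mul]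
  have hct : Subgroup.center Ghat = ⊤ := by
    rw [eq_top_iff, ← hkt]; exact hcentral
  have hbot : commutator Ghat = ⊥ := by
    rw [commutator_def, Subgroup.commutator_top_left_eq_bot_iff_le_center, hct]
  rw [hkt, ← hperf, hbot, Subgroup.card_bot] at hp'
  exact hp.one_lt.ne hp'

/-- Given a presentation of `G` with finite generator set `X` and finite nonempty relator
set `R` of total length `L`, any perfect central extension `Ĝ` of `G` by a group of prime
order `p` has a presentation with `|X| + 1` generators and `|X| + |R| + 1` relators of
total length at most `4|X| + 2L + p|R|`, in which one generator maps to a generator of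
the (central) kernel. -/
theorem presentation_of_central_extension
    (G : Type) [Group G] (X : Type) [Fintype X] [DecidableEq X]
    (π : FreeGroup X →* G) (hπ : Function.Surjective π)
    (R : Finset (FreeGroup X)) (hR : R.Nonempty)
    (hker : π.ker = Subgroup.normalClosure (R : Set (FreeGroup X)))
    (L : ℕ) (hL : L = ∑ r ∈ R, FreeGroup.norm r)
    (Ghat : Type) [Group Ghat] (hperf : commutator Ghat = ⊤)
    (p : ℕ) (hp : p.Prime)
    (φ : Ghat →* G) (hφ : Function.Surjective φ)
    (hcentral : φ.ker ≤ Subgroup.center Ghat)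
    (hp' : Nat.card φ.ker = p) :
    ∃ (πhat : FreeGroup (Fin (Fintype.card X + 1)) →* Ghat)
      (Rhat : Finset (FreeGroup (Fin (Fintype.card X + 1)))),
      Function.Surjective πhat ∧
      Rhat.card = Fintype.card X + R.card + 1 ∧
      πhat.ker = Subgroup.normalClosure (Rhat : Set (FreeGroup (Fin (Fintype.card X + 1)))) ∧
      (∑ r ∈ Rhat, FreeGroup.norm r) ≤ 4 * Fintype.card X + 2 * L + p * R.card ∧
      ∃ x : Fin (Fintype.card X + 1),
        Subgroup.zpowers (πhat (FreeGroup.of x)) = φ.ker := by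
  classical
  have hR2 : 2 ≤ R.card :=
    aux_two_le_card G X π hπ R hR hker Ghat hperf p hp φ hφ hcentral hp'
  -- a generator of the kernel
  obtain ⟨z0, hz0⟩ : ∃ z0 : Ghat, Subgroup.zpowers z0 = φ.ker := by
    have := Fact.mk hp
    have : IsCyclic φ.ker := isCyclic_of_prime_card hp'
    obtain ⟨g, hg⟩ := IsCyclic.exists_generator (α := φ.ker)
    refine ⟨g.1, le_antisymm ?_ ?_⟩
    · rw [Subgroup.zpowers_le]; exact g.2
    · intro a ha
      obtain ⟨k, hk⟩ := Subgroup.mem_zpowers_iff.mp (hg ⟨a, ha⟩)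
      exact Subgroup.mem_zpowers_iff.mpr ⟨k, by simpa using congrArg Subtype.val hk⟩
  have hord : orderOf z0 = p := by
    rw [← Nat.card_zpowers, hz0, hp']
  have hz0k : z0 ∈ φ.ker := hz0 ▸ Subgroup.mem_zpowers z0
  have hz0c : ∀ g, g * z0 = z0 * g := Subgroup.mem_center_iff.mp (hcentral hz0k)
  choose s hs using hφ
  let e := Fintype.equivFin X
  let j : X → Fin (Fintype.card X + 1) := fun x => (e x).castSucc
  let l : Fin (Fintype.card X + 1) := Fin.last _
  have hjl : ∀ x, j x ≠ l := fun x => Fin.castSucc_ne_last _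
  have hjinj : Function.Injective j := fun a b h => e.injective (Fin.castSucc_injective _ h)
  have hcase : ∀ i, i = l ∨ ∃ x, i = j x := by
    intro i
    induction i using Fin.lastCases with
    | last => exact Or.inl rfl
    | cast i => exact Or.inr ⟨e.symm i, by simp [j]⟩
  let πhat : FreeGroup (Fin (Fintype.card X + 1)) →* Ghat :=
    FreeGroup.lift (fun i => if h : ∃ x, i = j x then s (π (FreeGroup.of h.choose)) else z0)
  have hπl : πhat (FreeGroup.of l) = z0 := by
    have : ¬ ∃ x, l = j x := fun ⟨x, hx⟩ => hjl x hx.symm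
    simp [πhat, this]
  have hπj : ∀ x, πhat (FreeGroup.of (j x)) = s (π (FreeGroup.of x)) := by
    intro x
    have h : ∃ y, j x = j y := ⟨x, rfl⟩
    have h2 : h.choose = x := (hjinj h.choose_spec).symm
    simp only [πhat, FreeGroup.lift_apply_of]
    rw [dif_pos h, h2]
  let σ : FreeGroup (Fin (Fintype.card X + 1)) →* FreeGroup X :=
    FreeGroup.lift (fun i => if h : ∃ x, i = j x then FreeGroup.of h.choose else 1)
  have hσl : σ (FreeGroup.of l) = 1 := by
    have : ¬ ∃ x, l = j x := fun ⟨x, hx⟩ => hjl x hx.symm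
    simp [σ, this]
  have hσj : ∀ x, σ (FreeGroup.of (j x)) = FreeGroup.of x := by
    intro x
    have h : ∃ y, j x = j y := ⟨x, rfl⟩
    have h2 : h.choose = x := (hjinj h.choose_spec).symm
    simp only [σ, FreeGroup.lift_apply_of]
    rw [dif_pos h, h2]
  let ι : FreeGroup X →* FreeGroup (Fin (Fintype.card X + 1)) := FreeGroup.map j
  have hιof : ∀ x, ι (FreeGroup.of x) = FreeGroup.of (j x) := fun x => by simp [ι]
  have hσι : ∀ w, σ (ι w) = w := by
    have : σ.comp ι = MonoidHom.id _ := by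
      ext x; simp only [MonoidHom.comp_apply, hιof, hσj, MonoidHom.id_apply]
    exact fun w => DFunLike.congr_fun this w
  have hφπ : ∀ w, φ (πhat w) = π (σ w) := by
    have : φ.comp πhat = π.comp σ := by
      ext i
      simp only [MonoidHom.comp_apply]
      rcases hcase i with rfl | ⟨x, rfl⟩
      · rw [hπl, hσl, map_one]; exact hz0k
      · rw [hπj, hσj, hs]
    exact fun w => DFunLike.congr_fun this w
  have hsurj : Function.Surjective πhat := by
    intro g
    obtain ⟨w, hw⟩ := hπ (φ g)
    have hm : (πhat (ι w))⁻¹ * g ∈ Subgroup.zpowers z0 := by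
      rw [hz0, MonoidHom.mem_ker, map_mul, map_inv, hφπ, hσι, hw, inv_mul_cancel]
    obtain ⟨k, hk⟩ := Subgroup.mem_zpowers_iff.mp hm
    exact ⟨ι w * FreeGroup.of l ^ k, by rw [map_mul, map_zpow, hπl, hk, mul_inv_cancel_left]⟩
  -- exponents
  have hexp : ∀ r : {r // r ∈ R}, ∃ a : ℤ, πhat (ι r.1) = z0 ^ a ∧ a.natAbs ≤ p / 2 := by
    intro r
    have hm : πhat (ι r.1) ∈ Subgroup.zpowers z0 := by
      rw [hz0, MonoidHom.mem_ker, hφπ, hσι, ← MonoidHom.mem_ker, hker]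
      exact Subgroup.subset_normalClosure r.2
    obtain ⟨k, hk⟩ := Subgroup.mem_zpowers_iff.mp hm
    refine ⟨k.bmod p, ?_, ?_⟩
    · have h1 : k.bmod p + p * k.bdiv p = k := Int.bmod_add_bdiv k p
      rw [← hk]
      conv_lhs => rw [← h1]
      rw [zpow_add, zpow_mul, zpow_natCast, ← hord, pow_orderOf_eq_one, one_zpow, mul_one]
    · have h1 := Int.bmod_le (x := k) (m := p) hp.pos
      have h2 := Int.le_bmod (x := k) (m := p) hp.pos
      omega
  choose a ha hap using hexp
  let f : Option X ⊕ {r // r ∈ R} → FreeGroup (Fin (Fintype.card X + 1)) := fun t =>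
    match t with
    | Sum.inl none => FreeGroup.of l ^ p
    | Sum.inl (some x) => ⁅FreeGroup.of (j x), FreeGroup.of l⁆
    | Sum.inr r => ι r.1 * FreeGroup.of l ^ (-a r)
  have hf1 : f (Sum.inl none) = FreeGroup.of l ^ p := rfl
  have hf2 : ∀ x, f (Sum.inl (some x)) = ⁅FreeGroup.of (j x), FreeGroup.of l⁆ := fun _ => rfl
  have hf3 : ∀ r, f (Sum.inr r) = ι r.1 * FreeGroup.of l ^ (-a r) := fun _ => rfl
  have hσ1 : ∀ o, σ (f (Sum.inl o)) = 1 := by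
    rintro (_ | x)
    · rw [hf1, map_pow, hσl, one_pow]
    · rw [hf2, map_commutatorElement, hσl]; simp
  have hσ3 : ∀ r, σ (f (Sum.inr r)) = r.1 := by
    intro r
    rw [hf3, map_mul, hσι, map_zpow, hσl, one_zpow, mul_one]
  let c : FreeGroup (Fin (Fintype.card X + 1)) →* Multiplicative ℤ :=
    FreeGroup.lift (fun _ => Multiplicative.ofAdd 1)
  have hc1 : c (f (Sum.inl none)) ≠ 1 := by
    rw [hf1, map_pow]
    intro h
    have := congrArg Multiplicative.toAdd h
    simp [c] at this
    exact hp.ne_zero this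
  have hc2 : ∀ x, c (f (Sum.inl (some x))) = 1 := by
    intro x
    rw [hf2, map_commutatorElement, commutatorElement_eq_one_iff_mul_comm, mul_comm]
  have hne1 : ∀ o, f (Sum.inl o) ≠ 1 := by
    rintro (_ | x) h
    · rw [h] at hc1; exact hc1 (map_one c)
    · obtain ⟨t, ht, -⟩ := aux_comm_sep (j x) l (hjl x)
      rw [← hf2 x, h] at ht
      exact ht (map_one t)
  have hlr : ∀ o r, f (Sum.inl o) ≠ f (Sum.inr r) := by
    intro o r h
    have hr : r.1 = 1 := by rw [← hσ3, ← h, hσ1]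
    have har := ha r
    rw [hr, map_one, map_one] at har
    have hd : (p : ℤ) ∣ a r := by
      rw [← hord]; exact orderOf_dvd_iff_zpow_eq_one.mpr har.symm
    have h0 : a r = 0 := by
      apply Int.eq_zero_of_dvd_of_natAbs_lt_natAbs hd
      rw [Int.natAbs_natCast]
      have := hap r
      have := hp.pos
      omega
    apply hne1 o
    rw [h, hf3, hr, h0]; simp
  have hfinj : Function.Injective f := by
    rintro (o | r) (o' | r') h
    · rcases o with _ | x <;> rcases o' with _ | x'
      · rfl
      · exact absurd (h ▸ hc2 x') hc1
      · exact absurd (h ▸ hc2 x) hc1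
      · by_cases hxx : x = x'
        · rw [hxx]
        · exfalso
          obtain ⟨t, ht, ht'⟩ := aux_comm_sep (j x) l (hjl x)
          apply ht
          rw [← hf2 x, h, hf2]
          exact ht' _ (fun h' => hxx (hjinj h').symm) (hjl _)
    · exact absurd h (hlr _ _)
    · exact absurd h.symm (hlr _ _)
    · have : r.1 = r'.1 := by rw [← hσ3, h, hσ3]
      rw [Subtype.ext this]
  have hfker : ∀ t, πhat (f t) = 1 := by
    rintro ((_ | x) | r)
    · rw [hf1, map_pow, hπl, ← hord, pow_orderOf_eq_one]
    · rw [hf2, map_commutatorElement, hπl, commutatorElement_eq_one_iff_mul_comm]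
      exact hz0c _
    · rw [hf3, map_mul, map_zpow, hπl, ha, zpow_neg, mul_inv_cancel]
  refine ⟨πhat, Finset.univ.map ⟨f, hfinj⟩, hsurj, ?_, ?_, ?_, l, by rw [hπl, hz0]⟩
  · simp only [Finset.card_map, Finset.card_univ, Fintype.card_sum, Fintype.card_option,
      Fintype.card_coe]
    omega
  · have hset : ((Finset.univ.map ⟨f, hfinj⟩ : Finset _) :
        Set (FreeGroup (Fin (Fintype.card X + 1)))) = Set.range f := by simp
    rw [hset]
    have hle : Subgroup.normalClosure (Set.range f) ≤ πhat.ker := by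
      apply Subgroup.normalClosure_le_normal
      rintro _ ⟨t, rfl⟩
      exact hfker t
    refine le_antisymm ?_ hle
    let N := Subgroup.normalClosure (Set.range f)
    let q : FreeGroup (Fin (Fintype.card X + 1)) →* _ ⧸ N := QuotientGroup.mk' N
    have hq : ∀ w, q w = 1 ↔ w ∈ N := fun w => QuotientGroup.eq_one_iff w
    have hqf : ∀ t, q (f t) = 1 := fun t =>
      (hq _).mpr (Subgroup.subset_normalClosure ⟨t, rfl⟩)
    have hζp : q (FreeGroup.of l) ^ p = 1 := by
      have h := hqf (Sum.inl none)
      rw [hf1, map_pow] at h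
      exact h
    have hζj : ∀ x, Commute (q (FreeGroup.of l)) (q (FreeGroup.of (j x))) := by
      intro x
      have := hqf (Sum.inl (some x))
      rw [hf2, map_commutatorElement, commutatorElement_eq_one_iff_mul_comm] at this
      exact this.symm
    have hζ0 : ∀ w, Commute (q (FreeGroup.of l)) (q w) := by
      have hgen : ∀ i, Commute (q (FreeGroup.of l)) (q (FreeGroup.of i)) := by
        intro i
        rcases hcase i with rfl | ⟨x, rfl⟩
        · exact Commute.refl _
        · exact hζj x
      intro w
      induction w using FreeGroup.induction_on with
      | C1 => rw [map_one]; exact Commute.one_right _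
      | of i => exact hgen i
      | inv_of i _ => rw [map_inv]; exact (hgen i).inv_right
      | mul a b ha hb => rw [map_mul]; exact ha.mul_right hb
    let Z := Subgroup.zpowers (q (FreeGroup.of l))
    have hZ : Z.Normal := by
      refine ⟨fun n hn g => ?_⟩
      obtain ⟨w, rfl⟩ := QuotientGroup.mk'_surjective N g
      obtain ⟨k, rfl⟩ := Subgroup.mem_zpowers_iff.mp hn
      have h := ((hζ0 w).zpow_left k).eq
      change q w * q (FreeGroup.of l) ^ k * (q w)⁻¹ ∈ Z
      rw [← h, mul_inv_cancel_right]
      exact hn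
    have hrel : Subgroup.normalClosure (R : Set (FreeGroup X)) ≤ Z.comap (q.comp ι) := by
      have : (Z.comap (q.comp ι)).Normal := hZ.comap _
      apply Subgroup.normalClosure_le_normal
      intro r hr
      have := hqf (Sum.inr ⟨r, hr⟩)
      rw [hf3, map_mul, map_zpow, zpow_neg, mul_inv_eq_one] at this
      exact Subgroup.mem_zpowers_iff.mpr ⟨_, this.symm⟩
    have hdec : ∀ w, ∃ k : ℤ, q w = q (ι (σ w)) * q (FreeGroup.of l) ^ k := by
      have hgen : ∀ i, ∃ k : ℤ,
          q (FreeGroup.of i) = q (ι (σ (FreeGroup.of i))) * q (FreeGroup.of l) ^ k := by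
        intro i
        rcases hcase i with rfl | ⟨x, rfl⟩
        · exact ⟨1, by rw [hσl]; simp⟩
        · exact ⟨0, by rw [hσj, hιof]; simp⟩
      intro w
      induction w using FreeGroup.induction_on with
      | C1 => exact ⟨0, by simp⟩
      | of i => exact hgen i
      | inv_of i _ =>
        obtain ⟨k, hk⟩ := hgen i
        refine ⟨-k, ?_⟩
        rw [map_inv, hk, map_inv, map_inv, map_inv, mul_inv_rev, zpow_neg]
        exact (((hζ0 _).zpow_left k).inv_inv).eq
      | mul u v hu hv =>
        obtain ⟨k, hk⟩ := hu
        obtain ⟨m, hm⟩ := hv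
        refine ⟨k + m, ?_⟩
        have h := ((hζ0 (ι (σ v))).zpow_left k).eq
        rw [map_mul, hk, hm, map_mul, map_mul, map_mul, zpow_add, mul_assoc, mul_assoc,
          ← mul_assoc (q (FreeGroup.of l) ^ k), h, mul_assoc]
    intro w hw
    have hσw : σ w ∈ π.ker := by
      rw [MonoidHom.mem_ker, ← hφπ, MonoidHom.mem_ker.mp hw, map_one]
    rw [hker] at hσw
    obtain ⟨m, hm⟩ := Subgroup.mem_zpowers_iff.mp (hrel hσw)
    obtain ⟨k, hk⟩ := hdec w
    have hm' : q (FreeGroup.of l) ^ m = q (ι (σ w)) := hm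
    rw [← hm', ← zpow_add] at hk
    have hwN : w * (FreeGroup.of l ^ (m + k))⁻¹ ∈ N := by
      rw [← hq, map_mul, map_inv, map_zpow, hk, mul_inv_cancel]
    have h1 := MonoidHom.mem_ker.mp (hle hwN)
    rw [map_mul, MonoidHom.mem_ker.mp hw, one_mul, map_inv, inv_eq_one, map_zpow, hπl,
      ← orderOf_dvd_iff_zpow_eq_one, hord] at h1
    obtain ⟨d, hd⟩ := h1
    change w ∈ N
    rw [← hq, hk, hd, zpow_mul, zpow_natCast, hζp, one_zpow]
  · rw [Finset.sum_map]
    simp only [Function.Embedding.coeFn_mk]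
    rw [Fintype.sum_sum_type, Fintype.sum_option]
    have h1 : (f (Sum.inl none)).norm = p := by rw [hf1, FreeGroup.norm_of_pow]
    have h2 : ∑ x, (f (Sum.inl (some x))).norm ≤ Fintype.card X * 4 := by
      have := Finset.sum_le_card_nsmul Finset.univ (fun x => (f (Sum.inl (some x))).norm) 4
        (fun x _ => by simpa only [hf2] using aux_norm_comm_le (j x) l)
      simpa using this
    have h3 : ∑ r, (f (Sum.inr r)).norm ≤ L + R.card * (p / 2) := by
      have hb : ∀ r : {r // r ∈ R}, (f (Sum.inr r)).norm ≤ r.1.norm + p / 2 := by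
        intro r
        rw [hf3]
        refine (FreeGroup.norm_mul_le _ _).trans (add_le_add (aux_norm_map_le _ _) ?_)
        refine (aux_norm_zpow_le _ _).trans ?_
        rw [Int.natAbs_neg]; exact hap r
      refine (Finset.sum_le_sum fun r _ => hb r).trans ?_
      rw [Finset.sum_add_distrib, hL, Finset.sum_coe_sort R (fun r => r.norm)]
      simp
    have h4 : p + R.card * (p / 2) ≤ p * R.card := by
      have h5 : p / 2 * 2 ≤ p := Nat.div_mul_le_self p 2
      nlinarith
    rw [h1]
    omega
end

section
/- Let p > 3 be a prime, let j be an integer with 1 ≤ j ≤ p − 1 whose residue generates the multiplicative group (ℤ/pℤ)ˣ, and let j̄ and 2̄ be the integers in [1, p] with j·j̄ ≡ 1 (mod p) and 2·2̄ ≡ 1 (mod p). Then the group presented by generators u, h₂, h, t subject to the eight relations u^p = 1, u^{h₂} = u⁴, u^{h} = u^{j²}, t² = 1, h^t = h⁻¹, t = u·u^t·u, h₂·t = u^{2̄}·(u²)^t·u^{2̄}, and h·t = u^{j̄}·(u^{j})^t·u^{j̄}, is isomorphic to PSL(2, F_p), via the map sending u, h₂, h, t to the images in PSL(2, F_p) of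 the matrices [[1,1],[0,1]], [[2̄,0],[0,2]], [[j̄,0],[0,j]], [[0,1],[−1,0]] respectively. -/
/-- The four generators `u, h₂, h, t` of the presentation of `PSL(2, p)`. -/
inductive PSLGen : Type
  | u : PSLGen
  | h2 : PSLGen
  | h : PSLGen
  | t : PSLGen

open FreeGroup in
/-- The eight relators of the presentation of `PSL(2, p)`:
`u^p`, `u^{h₂} = u⁴`, `u^{h} = u^{j²}`, `t² = 1`, `h^t = h⁻¹`, `t = u·uᵗ·u`,
`h₂·t = u^{2̄}·(u²)ᵗ·u^{2̄}` and `h·t = u^{j̄}·(uʲ)ᵗ·u^{j̄}`. -/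
def pslRels (p j jb tb : ℕ) : Set (FreeGroup PSLGen) :=
  { of PSLGen.u ^ p,
    (of PSLGen.h2)⁻¹ * of PSLGen.u * of PSLGen.h2 * (of PSLGen.u ^ 4)⁻¹,
    (of PSLGen.h)⁻¹ * of PSLGen.u * of PSLGen.h * (of PSLGen.u ^ (j ^ 2))⁻¹,
    of PSLGen.t ^ 2,
    (of PSLGen.t)⁻¹ * of PSLGen.h * of PSLGen.t * of PSLGen.h,
    of PSLGen.u * ((of PSLGen.t)⁻¹ * of PSLGen.u * of PSLGen.t) * of PSLGen.u *
      (of PSLGen.t)⁻¹,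
    of PSLGen.u ^ tb * ((of PSLGen.t)⁻¹ * of PSLGen.u ^ 2 * of PSLGen.t) *
      of PSLGen.u ^ tb * (of PSLGen.h2 * of PSLGen.t)⁻¹,
    of PSLGen.u ^ jb * ((of PSLGen.t)⁻¹ * of PSLGen.u ^ j * of PSLGen.t) *
      of PSLGen.u ^ jb * (of PSLGen.h * of PSLGen.t)⁻¹ }

/-- Consequences of the relations in an abstract group. `P` is the one-parameter root
subgroup, `h` the torus element, `t` the Weyl element. -/
structure SteinbergData (F : Type*) [Field F] (G : Type*) [Group G] (j : F) where
  P : F → G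
  h : G
  t : G
  hP : ∀ x y, P (x + y) = P x * P y
  hj : j ≠ 0
  hgen : ∀ x : F, x ≠ 0 → ∃ k : ℕ, x = j ^ k
  hconj : ∀ x, h⁻¹ * P x * h = P (x * j ^ 2)
  ht : t * t = 1
  hth : t * h * t = h⁻¹
  r6 : P 1 * t * P 1 * t * P 1 = t
  r8 : P j⁻¹ * t * P j * t * P j⁻¹ = h * t

namespace SteinbergData

variable {F : Type*} [Field F] {G : Type*} [Group G] {j : F} (S : SteinbergData F G j)

lemma P_zero : S.P 0 = 1 := by
  have := S.hP 0 0
  simpa using this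

lemma P_neg (x : F) : S.P (-x) = (S.P x)⁻¹ := by
  have := S.hP (-x) x
  rw [neg_add_cancel, P_zero] at this
  exact eq_inv_of_mul_eq_one_left this.symm

lemma t_inv : S.t⁻¹ = S.t := inv_eq_of_mul_eq_one_left S.ht

lemma t_h_zpow (k : ℤ) : S.t * S.h ^ k = S.h ^ (-k) * S.t := by
  have h1 : S.t * S.h * S.t⁻¹ = S.h⁻¹ := by rw [t_inv]; exact S.hth
  have h2 : S.t * S.h ^ k * S.t⁻¹ = S.h ^ (-k) := by
    rw [← conj_zpow, h1, inv_zpow']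
  rw [← h2]; group

lemma P_h (x : F) : S.P x * S.h = S.h * S.P (x * j ^ 2) := by
  rw [← S.hconj]; group

lemma h_P (x : F) : S.h * S.P x = S.P (x * (j ^ 2)⁻¹) * S.h := by
  rw [P_h]
  have := S.hj
  congr 2
  field_simp

lemma h_zpow_P (k : ℤ) : ∀ x : F, ∃ y, S.h ^ k * S.P x = S.P y * S.h ^ k := by
  induction k with
  | zero => intro x; exact ⟨x, by simp⟩
  | succ n ih =>
    intro x
    obtain ⟨y, hy⟩ := ih (x * (j ^ 2)⁻¹)
    refine ⟨y, ?_⟩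
    rw [zpow_add_one, mul_assoc, h_P, ← mul_assoc, hy, mul_assoc]
  | pred n ih =>
    intro x
    obtain ⟨y, hy⟩ := ih (x * j ^ 2)
    refine ⟨y, ?_⟩
    rw [zpow_sub_one, ← mul_assoc, ← hy, ← S.hconj]
    group

lemma P_h_zpow (k : ℤ) (x : F) : ∃ y, S.P x * S.h ^ k = S.h ^ k * S.P y := by
  obtain ⟨y, hy⟩ := S.h_zpow_P (-k) x
  refine ⟨y, ?_⟩
  have : S.h ^ k * (S.h ^ (-k) * S.P x) * S.h ^ k = S.h ^ k * (S.P y * S.h ^ (-k)) * S.h ^ k := by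
    rw [hy]
  simpa [mul_assoc] using this

lemma key (n : ℕ) :
    S.P (j ^ n)⁻¹ * S.t * S.P (j ^ n) * S.t * S.P (j ^ n)⁻¹ = S.h ^ n * S.t := by
  induction n using Nat.twoStepInduction with
  | zero => simpa using S.r6
  | one => simpa using S.r8
  | more n ih _ =>
    have hj := S.hj
    have e1 : S.P (j ^ (n + 2))⁻¹ = S.h * S.P (j ^ n)⁻¹ * S.h⁻¹ := by
      rw [h_P, mul_inv_cancel_right]
      congr 1; field_simp; ring
    have e2 : S.P (j ^ (n + 2)) = S.h⁻¹ * S.P (j ^ n) * S.h := by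
      rw [S.hconj]; congr 1; ring
    have h1 : S.h⁻¹ * S.t * S.h⁻¹ = S.t := by
      have := S.t_h_zpow (-1)
      simp only [zpow_neg_one, neg_neg, zpow_one] at this
      rw [mul_assoc, this, inv_mul_cancel_left]
    have h2 : S.h * S.t * S.h = S.t := by
      have := S.t_h_zpow 1
      simp only [zpow_neg_one, zpow_one] at this
      rw [mul_assoc, this, mul_inv_cancel_left]
    have h3 : S.t * S.h⁻¹ = S.h * S.t := by
      simpa using S.t_h_zpow (-1)
    calc _ = S.h * S.P (j ^ n)⁻¹ * (S.h⁻¹ * S.t * S.h⁻¹) * S.P (j ^ n) * (S.h * S.t * S.h)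
              * S.P (j ^ n)⁻¹ * S.h⁻¹ := by rw [e1, e2]; group
      _ = S.h * (S.P (j ^ n)⁻¹ * S.t * S.P (j ^ n) * S.t * S.P (j ^ n)⁻¹) * S.h⁻¹ := by
            rw [h1, h2]; group
      _ = S.h * S.h ^ n * (S.t * S.h⁻¹) := by rw [ih]; group
      _ = _ := by rw [h3, ← mul_assoc, ← pow_succ', ← pow_succ]

lemma h_pow_eq_one (n : ℕ) (hn : j ^ n = 1 ∨ j ^ n = -1) : S.h ^ n = 1 := by
  have := S.key n
  rcases hn with hn | hn
  · rw [hn, inv_one, S.r6] at this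
    exact (left_eq_mul₀' this)
  · rw [hn, inv_neg, inv_one, P_neg] at this
    have h6 := congrArg (fun x => x⁻¹) S.r6
    simp only [mul_inv_rev, t_inv] at h6
    have : S.t = S.h ^ n * S.t := by
      rw [← this]; nth_rewrite 1 [← h6]; group
    exact (left_eq_mul₀' this)
where
  left_eq_mul₀' {a b : G} (h : a = b * a) : b = 1 := by
    simpa using h

lemma h_zpow_eq_one (k : ℤ) (hk : j ^ k = 1 ∨ j ^ k = -1) : S.h ^ k = 1 := by
  rcases Int.natAbs_eq k with h | h <;> rw [h] at hk ⊢
  · rw [zpow_natCast] at hk ⊢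
    exact S.h_pow_eq_one _ hk
  · rw [zpow_neg, zpow_natCast] at hk ⊢
    rw [S.h_pow_eq_one, inv_one]
    rcases hk with hk | hk
    · left; simpa using hk
    · right; rw [inv_eq_iff_eq_inv] at hk; rw [hk, inv_neg, inv_one]

/-- Bruhat normal forms. -/
def N : Set G := {g | (∃ a, ∃ k : ℤ, g = S.P a * S.h ^ k) ∨
  (∃ a b, ∃ k : ℤ, g = S.P a * S.h ^ k * S.t * S.P b)}

lemma P_mul_mem (x : F) (g : G) (hg : g ∈ S.N) : S.P x * g ∈ S.N := by
  rcases hg with ⟨a, k, rfl⟩ | ⟨a, b, k, rfl⟩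
  · exact Or.inl ⟨x + a, k, by rw [S.hP, mul_assoc]⟩
  · exact Or.inr ⟨x + a, b, k, by rw [S.hP]; group⟩

lemma t_mul_mem (g : G) (hg : g ∈ S.N) : S.t * g ∈ S.N := by
  rcases hg with ⟨a, k, rfl⟩ | ⟨a, b, k, rfl⟩
  · obtain ⟨y, hy⟩ := S.P_h_zpow k a
    refine Or.inr ⟨0, y, -k, ?_⟩
    rw [hy, P_zero, one_mul, ← t_h_zpow, mul_assoc]
  · have e : S.h ^ k * S.t = S.t * S.h ^ (-k) := by rw [t_h_zpow, neg_neg]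
    by_cases ha : a = 0
    · obtain ⟨y, hy⟩ := S.h_zpow_P (-k) b
      refine Or.inl ⟨y, -k, ?_⟩
      rw [ha, P_zero, one_mul, e, ← mul_assoc, ← mul_assoc, S.ht, one_mul, hy]
    · obtain ⟨n, hn⟩ := S.hgen a ha
      have hk := S.key n
      rw [← hn] at hk
      have h2 : S.t * S.P a * S.t = S.P (-a⁻¹) * S.h ^ n * S.t * S.P (-a⁻¹) := by
        rw [P_neg, mul_assoc _ (S.h ^ n), ← hk]; group
      obtain ⟨y, hy⟩ := S.P_h_zpow (-k) (-a⁻¹)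
      refine Or.inr ⟨-a⁻¹, y + b, n + k, ?_⟩
      calc _ = (S.t * S.P a) * (S.h ^ k * S.t) * S.P b := by group
        _ = (S.t * S.P a * S.t) * S.h ^ (-k) * S.P b := by rw [e]; group
        _ = S.P (-a⁻¹) * S.h ^ n * S.t * (S.P (-a⁻¹) * S.h ^ (-k)) * S.P b := by rw [h2]; group
        _ = S.P (-a⁻¹) * S.h ^ n * (S.t * S.h ^ (-k)) * (S.P y * S.P b) := by rw [hy]; group
        _ = _ := by rw [t_h_zpow, ← S.hP, neg_neg, zpow_add, zpow_natCast]; group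

/-- Elements which preserve the set of normal forms. -/
def M : Submonoid G where
  carrier := {g | ∀ x ∈ S.N, g * x ∈ S.N}
  one_mem' := fun x hx => by simpa using hx
  mul_mem' := fun {a b} ha hb x hx => by
    rw [mul_assoc]; exact ha _ (hb _ hx)

lemma P_mem (x : F) : S.P x ∈ S.M := S.P_mul_mem x
lemma t_mem : S.t ∈ S.M := S.t_mul_mem

lemma mem_N_of_mem_M (g : G) (hg : g ∈ S.M) : g ∈ S.N := by
  have := hg 1 (Or.inl ⟨0, 0, by simp [P_zero]⟩)
  simpa using this

lemma h_mem : S.h ∈ S.M := by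
  have : S.h = S.P j⁻¹ * S.t * S.P j * S.t * S.P j⁻¹ * S.t := by
    rw [S.r8, mul_assoc, S.ht, mul_one]
  rw [this]
  exact S.M.mul_mem (S.M.mul_mem (S.M.mul_mem (S.M.mul_mem (S.M.mul_mem (S.P_mem _) S.t_mem)
    (S.P_mem _)) S.t_mem) (S.P_mem _)) S.t_mem

lemma h_inv_mem : S.h⁻¹ ∈ S.M := by
  rw [← S.hth]
  exact S.M.mul_mem (S.M.mul_mem S.t_mem S.h_mem) S.t_mem

end SteinbergData

section SL

open Matrix

variable {F : Type*} [Field F]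

lemma sl_ext {a b : SpecialLinearGroup (Fin 2) F}
    (h : (a : Matrix (Fin 2) (Fin 2) F) = b) : a = b := Subtype.ext h

/-- Upper unitriangular matrix. -/
def slU (x : F) : SpecialLinearGroup (Fin 2) F :=
  ⟨!![1, x; 0, 1], by simp⟩

/-- Lower unitriangular matrix. -/
def slL (x : F) : SpecialLinearGroup (Fin 2) F :=
  ⟨!![1, 0; x, 1], by simp⟩

/-- The Weyl element. -/
def slT (F : Type*) [Field F] : SpecialLinearGroup (Fin 2) F :=
  ⟨!![0, 1; -1, 0], by simp⟩

/-- The torus. -/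
def slD0 (a : Fˣ) : SpecialLinearGroup (Fin 2) F :=
  ⟨!![(a : F)⁻¹, 0; 0, (a : F)], by simp⟩

lemma coe_slU (x : F) : (slU x : Matrix (Fin 2) (Fin 2) F) = !![1, x; 0, 1] := rfl
lemma coe_slL (x : F) : (slL x : Matrix (Fin 2) (Fin 2) F) = !![1, 0; x, 1] := rfl
lemma coe_slT : (slT F : Matrix (Fin 2) (Fin 2) F) = !![0, 1; -1, 0] := rfl
lemma coe_slD0 (a : Fˣ) :
  (slD0 a : Matrix (Fin 2) (Fin 2) F) = !![(a : F)⁻¹, 0; 0, (a : F)] := rfl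

/-- The torus, as a homomorphism. -/
def slD : Fˣ →* SpecialLinearGroup (Fin 2) F where
  toFun := slD0
  map_one' := by
    apply sl_ext
    simp [coe_slD0, Matrix.one_fin_two]
  map_mul' a b := by
    apply sl_ext
    simp [coe_slD0, mul_comm]

lemma coe_slD (a : Fˣ) :
  (slD a : Matrix (Fin 2) (Fin 2) F) = !![(a : F)⁻¹, 0; 0, (a : F)] := rfl

lemma slU_add (x y : F) : slU (x + y) = slU x * slU y := by
  apply sl_ext
  simp [coe_slU, add_comm]

lemma slU_zero : slU (0 : F) = 1 := by
  apply sl_ext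
  simp [coe_slU, Matrix.one_fin_two]

lemma slU_pow (x : F) (n : ℕ) : slU x ^ n = slU (n * x) := by
  induction n with
  | zero => simp [slU_zero]
  | succ n ih => rw [pow_succ, ih, ← slU_add]; congr 1; push_cast; ring

lemma slT_sq_mem : slT F ^ 2 ∈ Subgroup.center (SpecialLinearGroup (Fin 2) F) := by
  rw [Subgroup.mem_center_iff]
  intro g
  apply sl_ext
  rw [pow_two]
  change (g : Matrix (Fin 2) (Fin 2) F) * (!![0, 1; -1, 0] * !![0, 1; -1, 0]) =
    (!![0, 1; -1, 0] * !![0, 1; -1, 0]) * (g : Matrix (Fin 2) (Fin 2) F)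
  rw [Matrix.eta_fin_two (g : Matrix (Fin 2) (Fin 2) F)]
  simp

lemma sl_rel_conj (a : Fˣ) (x : F) : (slD a)⁻¹ * slU x * slD a = slU (a ^ 2 * x) := by
  rw [mul_assoc, inv_mul_eq_iff_eq_mul]
  apply sl_ext
  simp [coe_slD, coe_slU]
  field_simp

lemma sl_rel_th (a : Fˣ) : (slT F)⁻¹ * slD a * slT F = (slD a)⁻¹ := by
  rw [mul_assoc, inv_mul_eq_iff_eq_mul, ← map_inv]
  apply sl_ext
  simp [coe_slD, coe_slT]

lemma slL_eq (x : F) : (slT F)⁻¹ * slU x * slT F = slL (-x) := by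
  rw [mul_assoc, inv_mul_eq_iff_eq_mul]
  apply sl_ext
  simp [coe_slU, coe_slT, coe_slL]

lemma sl_rel_key (a : Fˣ) :
    slU (a : F)⁻¹ * ((slT F)⁻¹ * slU (a : F) * slT F) * slU (a : F)⁻¹ = slD a * slT F := by
  rw [slL_eq]
  apply sl_ext
  simp [coe_slU, coe_slT, coe_slL, coe_slD]

/-- generation of SL2 -/
lemma sl_gen (K : Subgroup (SpecialLinearGroup (Fin 2) F)) (hU : ∀ x, slU x ∈ K)
    (hT : slT F ∈ K) : K = ⊤ := by
  have main : ∀ g : SpecialLinearGroup (Fin 2) F, g 1 0 ≠ 0 → g ∈ K := by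
    intro g hg
    have hd := g.det_coe
    rw [Matrix.det_fin_two] at hd
    have : g = slU ((g 0 0 - 1) / g 1 0) * ((slT F)⁻¹ * slU (- g 1 0) * slT F) *
        slU ((g 1 1 - 1) / g 1 0) := by
      rw [slL_eq]
      apply sl_ext
      change (g : Matrix (Fin 2) (Fin 2) F) = !![1, (g 0 0 - 1) / g 1 0; 0, 1] *
        !![1, 0; - -g 1 0, 1] * !![1, (g 1 1 - 1) / g 1 0; 0, 1]
      ext i k
      fin_cases i <;> fin_cases k <;> simp <;> field_simp
      · ring
      · linear_combination -hd
      · ring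
    rw [this]
    exact K.mul_mem (K.mul_mem (hU _) (K.mul_mem (K.mul_mem (K.inv_mem hT) (hU _)) hT)) (hU _)
  rw [eq_top_iff]
  intro g _
  by_cases hg : g 1 0 = 0
  · have : slT F * g ∈ K := by
      apply main
      have hd := g.det_coe
      rw [Matrix.det_fin_two, hg] at hd
      have : (slT F * g) 1 0 = - g 0 0 := by
        simp [coe_slT, Matrix.mul_apply, Fin.sum_univ_two]
      rw [this, neg_ne_zero]
      rintro h
      rw [h] at hd
      simp at hd
    exact (K.mul_mem_cancel_left hT).1 this
  · exact main g hg

lemma center_entries (g : SpecialLinearGroup (Fin 2) F)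
    (hg : g ∈ Subgroup.center (SpecialLinearGroup (Fin 2) F)) :
    g 0 1 = 0 ∧ g 1 0 = 0 ∧ g 0 0 = g 1 1 := by
  rw [Subgroup.mem_center_iff] at hg
  have h1 := hg (slU 1)
  have h2 := hg (slT F)
  have a := congrArg (fun m : SpecialLinearGroup (Fin 2) F => m 0 0) h1
  have b := congrArg (fun m : SpecialLinearGroup (Fin 2) F => m 0 0) h2
  have c := congrArg (fun m : SpecialLinearGroup (Fin 2) F => m 0 1) h2
  simp [coe_slU, coe_slT, Matrix.mul_apply, Fin.sum_univ_two] at a b c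
  refine ⟨?_, a, c.symm⟩
  rw [a] at b
  simpa using b.symm

end SL

lemma borel_center {F : Type*} [Field F] (a : F) (X : Fˣ)
    (hg : slU a * slD X ∈ Subgroup.center (Matrix.SpecialLinearGroup (Fin 2) F)) :
    a = 0 ∧ (X : F)⁻¹ = X := by
  obtain ⟨h1, -, h3⟩ := center_entries _ hg
  change (!![1, a; 0, 1] * !![(X : F)⁻¹, 0; 0, (X : F)]) 0 1 = 0 at h1
  change (!![1, a; 0, 1] * !![(X : F)⁻¹, 0; 0, (X : F)]) 0 0 =
    (!![1, a; 0, 1] * !![(X : F)⁻¹, 0; 0, (X : F)]) 1 1 at h3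
  simp only [Matrix.mul_apply, Fin.sum_univ_two] at h1 h3
  simp at h1 h3
  exact ⟨h1, h3⟩

lemma bigcell_center {F : Type*} [Field F] (a b : F) (X : Fˣ)
    (hg : slU a * slD X * slT F * slU b ∈
      Subgroup.center (Matrix.SpecialLinearGroup (Fin 2) F)) : False := by
  obtain ⟨-, h1, -⟩ := center_entries _ hg
  change (!![1, a; 0, 1] * !![(X : F)⁻¹, 0; 0, (X : F)] * !![0, 1; -1, 0] * !![1, b; 0, 1] :
    Matrix (Fin 2) (Fin 2) F) 1 0 = 0 at h1
  simp at h1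

/-- The relations, spelled out in an arbitrary group. -/
lemma pslRels_unfold {G : Type*} [Group G] (p j jb tb : ℕ) (f : PSLGen → G)
    (rel : ∀ r ∈ pslRels p j jb tb, FreeGroup.lift f r = 1) :
    f PSLGen.u ^ p = 1 ∧
    (f PSLGen.h2)⁻¹ * f PSLGen.u * f PSLGen.h2 * (f PSLGen.u ^ 4)⁻¹ = 1 ∧
    (f PSLGen.h)⁻¹ * f PSLGen.u * f PSLGen.h * (f PSLGen.u ^ (j ^ 2))⁻¹ = 1 ∧
    f PSLGen.t ^ 2 = 1 ∧
    (f PSLGen.t)⁻¹ * f PSLGen.h * f PSLGen.t * f PSLGen.h = 1 ∧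
    f PSLGen.u * ((f PSLGen.t)⁻¹ * f PSLGen.u * f PSLGen.t) * f PSLGen.u *
      (f PSLGen.t)⁻¹ = 1 ∧
    f PSLGen.u ^ tb * ((f PSLGen.t)⁻¹ * f PSLGen.u ^ 2 * f PSLGen.t) *
      f PSLGen.u ^ tb * (f PSLGen.h2 * f PSLGen.t)⁻¹ = 1 ∧
    f PSLGen.u ^ jb * ((f PSLGen.t)⁻¹ * f PSLGen.u ^ j * f PSLGen.t) *
      f PSLGen.u ^ jb * (f PSLGen.h * f PSLGen.t)⁻¹ = 1 := by
  simpa only [pslRels, Set.mem_insert_iff, Set.mem_singleton_iff, forall_eq_or_imp, forall_eq,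
    map_mul, map_pow, map_inv, FreeGroup.lift_apply_of] using rel

/-- The matrices of the generators. -/
def pslMat {F : Type*} [Field F] (J W : Fˣ) : PSLGen → Matrix.SpecialLinearGroup (Fin 2) F
  | PSLGen.u => slU 1
  | PSLGen.h2 => slD W
  | PSLGen.h => slD J
  | PSLGen.t => slT F

/-- For a prime `p > 3`, an integer `j` whose residue generates `(ℤ/p)ˣ`, and `j̄, 2̄`
the inverses of `j` and `2` modulo `p` lying in `[1, p]`, the group presented by
`u, h₂, h, t` subject to the eight relations of `pslRels` is isomorphic to
`PSL(2, 𝔽_p)`, via the map sending the generators to the images of the matrices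
`[[1,1],[0,1]]`, `[[2̄,0],[0,2]]`, `[[j̄,0],[0,j]]`, `[[0,1],[-1,0]]`. -/
theorem presentation_of_PSL2
    (p : ℕ) (hp : p.Prime) (hp3 : 3 < p)
    (j : ℕ) (hj1 : 1 ≤ j) (hjp : j ≤ p - 1)
    (hjgen : ∀ x : (ZMod p)ˣ, ∃ k : ℕ, (x : ZMod p) = (j : ZMod p) ^ k)
    (jb : ℕ) (hjb1 : 1 ≤ jb) (hjbp : jb ≤ p) (hjb : (j * jb) % p = 1)
    (tb : ℕ) (htb1 : 1 ≤ tb) (htbp : tb ≤ p) (htb : (2 * tb) % p = 1) :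
    ∃ e : PresentedGroup (pslRels p j jb tb) ≃*
        (Matrix.SpecialLinearGroup (Fin 2) (ZMod p) ⧸
          Subgroup.center (Matrix.SpecialLinearGroup (Fin 2) (ZMod p))),
      ∃ U H2 H T : Matrix.SpecialLinearGroup (Fin 2) (ZMod p),
        (U : Matrix (Fin 2) (Fin 2) (ZMod p)) = !![1, 1; 0, 1] ∧
        (H2 : Matrix (Fin 2) (Fin 2) (ZMod p)) = !![(tb : ZMod p), 0; 0, 2] ∧
        (H : Matrix (Fin 2) (Fin 2) (ZMod p)) = !![(jb : ZMod p), 0; 0, (j : ZMod p)] ∧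
        (T : Matrix (Fin 2) (Fin 2) (ZMod p)) = !![0, 1; -1, 0] ∧
        e (PresentedGroup.of (rels := pslRels p j jb tb) PSLGen.u) = QuotientGroup.mk U ∧
        e (PresentedGroup.of (rels := pslRels p j jb tb) PSLGen.h2) = QuotientGroup.mk H2 ∧
        e (PresentedGroup.of (rels := pslRels p j jb tb) PSLGen.h) = QuotientGroup.mk H ∧
        e (PresentedGroup.of (rels := pslRels p j jb tb) PSLGen.t) = QuotientGroup.mk T := by
  have : Fact p.Prime := ⟨hp⟩
  have hjb' : (j : ZMod p) * jb = 1 := by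
    have := (ZMod.natCast_eq_natCast_iff' (j * jb) 1 p).2
      (by rw [hjb, Nat.mod_eq_of_lt hp.one_lt])
    simpa using this
  have htb' : (2 : ZMod p) * tb = 1 := by
    have := (ZMod.natCast_eq_natCast_iff' (2 * tb) 1 p).2
      (by rw [htb, Nat.mod_eq_of_lt hp.one_lt])
    simpa using this
  obtain ⟨J, hJ⟩ : ∃ J : (ZMod p)ˣ, (J : ZMod p) = j :=
    ⟨Units.mk0 (j : ZMod p) (left_ne_zero_of_mul_eq_one hjb'), rfl⟩
  obtain ⟨W, hW⟩ : ∃ W : (ZMod p)ˣ, (W : ZMod p) = 2 :=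
    ⟨Units.mk0 (2 : ZMod p) (left_ne_zero_of_mul_eq_one htb'), rfl⟩
  have hJb : (jb : ZMod p) = (J : ZMod p)⁻¹ := by
    rw [hJ]; exact eq_inv_of_mul_eq_one_right hjb'
  have hWb : (tb : ZMod p) = (W : ZMod p)⁻¹ := by
    rw [hW]; exact eq_inv_of_mul_eq_one_right htb'
  let f : PSLGen → (Matrix.SpecialLinearGroup (Fin 2) (ZMod p) ⧸
          Subgroup.center (Matrix.SpecialLinearGroup (Fin 2) (ZMod p))) :=
    fun g => QuotientGroup.mk' _ (pslMat J W g)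
  have hf : ∀ r ∈ pslRels p j jb tb, FreeGroup.lift f r = 1 := by
    have hl : ∀ r, FreeGroup.lift f r = QuotientGroup.mk' _ (FreeGroup.lift (pslMat J W) r) := by
      intro r
      have : FreeGroup.lift f = (QuotientGroup.mk' _).comp (FreeGroup.lift (pslMat J W)) := by
        ext g; simp [f]
      rw [this]; rfl
    have hU1 : ∀ n : ℕ, slU (1 : ZMod p) ^ n = slU (n : ZMod p) := by
      intro n; rw [slU_pow, mul_one]
    intro r hr
    rw [hl, ← MonoidHom.mem_ker, QuotientGroup.ker_mk']
    simp only [pslRels, Set.mem_insert_iff, Set.mem_singleton_iff] at hr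
    have key0 : ∀ x : Matrix.SpecialLinearGroup (Fin 2) (ZMod p), x = 1 →
        x ∈ Subgroup.center (Matrix.SpecialLinearGroup (Fin 2) (ZMod p)) := by
      rintro x rfl; exact Subgroup.one_mem _
    rcases hr with rfl | rfl | rfl | rfl | rfl | rfl | rfl | rfl
    all_goals simp only [map_mul, map_pow, map_inv, FreeGroup.lift_apply_of, pslMat]
    · apply key0
      rw [hU1, ZMod.natCast_self, slU_zero]
    · apply key0
      rw [sl_rel_conj, hU1, hW, mul_inv_eq_one]
      congr 1; push_cast; norm_num
    · apply key0
      rw [sl_rel_conj, hU1, hJ, mul_inv_eq_one]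
      congr 1; push_cast; ring
    · exact slT_sq_mem
    · apply key0
      rw [sl_rel_th, inv_mul_cancel]
    · apply key0
      have := sl_rel_key (1 : (ZMod p)ˣ)
      simp only [Units.val_one, inv_one, map_one, one_mul] at this
      rw [this, mul_inv_cancel]
    · apply key0
      have := sl_rel_key W
      rw [hU1, hU1, hWb, mul_inv_eq_one, ← this, hW]
      simp
    · apply key0
      have := sl_rel_key J
      rw [hU1, hU1, hJb, mul_inv_eq_one, ← this, hJ]
  let φ := PresentedGroup.toGroup hf
  have φof : ∀ g, φ (PresentedGroup.of g) = QuotientGroup.mk' _ (pslMat J W g) := by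
    intro g; exact PresentedGroup.toGroup.of hf
  -- the relations in the presented group
  let of' : PSLGen → PresentedGroup (pslRels p j jb tb) := fun g => PresentedGroup.of g
  have rel : ∀ r ∈ pslRels p j jb tb, FreeGroup.lift of' r = 1 := by
    intro r hr
    have : FreeGroup.lift of' = PresentedGroup.mk (pslRels p j jb tb) := by
      ext g; simp [of', PresentedGroup.of]
    rw [this]
    exact PresentedGroup.one_of_mem hr
  obtain ⟨u, hu⟩ : ∃ u, u = of' PSLGen.u := ⟨_, rfl⟩
  obtain ⟨h2, hh2⟩ : ∃ u, u = of' PSLGen.h2 := ⟨_, rfl⟩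
  obtain ⟨h, hh⟩ : ∃ u, u = of' PSLGen.h := ⟨_, rfl⟩
  obtain ⟨t, ht⟩ : ∃ u, u = of' PSLGen.t := ⟨_, rfl⟩
  have rel := pslRels_unfold p j jb tb of' rel
  rw [← hu, ← hh2, ← hh, ← ht] at rel
  obtain ⟨R1, R2, R3, R4, R5, R6, R7, R8⟩ := rel
  have tt : t * t = 1 := by rw [← pow_two, R4]
  have tinv : t⁻¹ = t := inv_eq_of_mul_eq_one_left tt
  rw [tinv] at R5 R6 R7 R8
  rw [mul_inv_eq_one] at R7 R8
  have Pnat : ∀ n : ℕ, u ^ (n : ZMod p).val = u ^ n := by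
    intro n
    rw [ZMod.val_natCast, ← pow_eq_pow_mod _ R1]
  have r3 : h⁻¹ * u * h = u ^ (j ^ 2) := mul_inv_eq_one.1 R3
  let S : SteinbergData (ZMod p) (PresentedGroup (pslRels p j jb tb)) (j : ZMod p) :=
    { P := fun x => u ^ x.val
      h := h
      t := t
      hP := by
        intro x y
        rw [ZMod.val_add, ← pow_eq_pow_mod _ R1, pow_add]
      hj := left_ne_zero_of_mul_eq_one hjb'
      hgen := by
        intro x hx
        exact hjgen (Units.mk0 x hx)
      hconj := by
        intro x
        have e1 : h⁻¹ * u ^ x.val * h = (h⁻¹ * u * h) ^ x.val := by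
          have := conj_pow (a := h⁻¹) (b := u) (i := x.val)
          rw [inv_inv] at this
          exact this.symm
        have e2 : x * (j : ZMod p) ^ 2 = ((j ^ 2 * x.val : ℕ) : ZMod p) := by
          push_cast
          rw [ZMod.natCast_zmod_val, mul_comm]
        rw [e1, r3, e2, Pnat, pow_mul]
      ht := tt
      hth := eq_inv_of_mul_eq_one_left R5
      r6 := by
        have e : u ^ (1 : ZMod p).val = u := by
          have := Pnat 1
          simpa using this
        rw [e]
        have := mul_eq_one_iff_eq_inv.1 R6
        rw [tinv] at this
        simpa [mul_assoc] using this
      r8 := by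
        have e : (j : ZMod p)⁻¹ = (jb : ZMod p) := by rw [hJb, hJ]
        rw [e, Pnat, Pnat]
        simpa [mul_assoc] using R8 }
  have SP : ∀ x, S.P x = u ^ x.val := fun _ => rfl
  have φu : φ u = QuotientGroup.mk' _ (slU 1) := by rw [hu]; exact φof _
  have φt : φ t = QuotientGroup.mk' _ (slT _) := by rw [ht]; exact φof _
  have φh : φ h = QuotientGroup.mk' _ (slD J) := by rw [hh]; exact φof _
  have φP : ∀ x, φ (S.P x) = QuotientGroup.mk' _ (slU x) := by
    intro x
    rw [SP, map_pow, φu, ← map_pow, slU_pow, mul_one, ZMod.natCast_zmod_val]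
  have φhk : ∀ k : ℤ, φ (S.h ^ k) = QuotientGroup.mk' _ (slD (J ^ k)) := by
    intro k
    change φ (h ^ k) = _
    rw [map_zpow, φh, ← map_zpow, ← map_zpow]
  have u_mem : u ∈ S.M := by
    have := S.P_mem ((1 : ℕ) : ZMod p)
    rwa [SP, Pnat, pow_one] at this
  have u_inv_mem : u⁻¹ ∈ S.M := by
    have := S.P_mem (-((1 : ℕ) : ZMod p))
    rwa [S.P_neg, SP, Pnat, pow_one] at this
  have t_mem : t ∈ S.M := S.t_mem
  have h2e : h2 = u ^ tb * (t * u ^ 2 * t) * u ^ tb * t := by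
    rw [R7, mul_assoc, tt, mul_one]
  have h2e' : h2⁻¹ = t * (u⁻¹ ^ tb * (t * u⁻¹ ^ 2 * t) * u⁻¹ ^ tb) := by
    rw [h2e]; simp only [mul_inv_rev, tinv, inv_pow, mul_assoc]
  have h2_mem : h2 ∈ S.M := by
    rw [h2e]
    exact S.M.mul_mem (S.M.mul_mem (S.M.mul_mem (S.M.pow_mem u_mem _) (S.M.mul_mem
      (S.M.mul_mem t_mem (S.M.pow_mem u_mem _)) t_mem)) (S.M.pow_mem u_mem _)) t_mem
  have h2_inv_mem : h2⁻¹ ∈ S.M := by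
    rw [h2e']
    exact S.M.mul_mem t_mem (S.M.mul_mem (S.M.mul_mem (S.M.pow_mem u_inv_mem _) (S.M.mul_mem
      (S.M.mul_mem t_mem (S.M.pow_mem u_inv_mem _)) t_mem)) (S.M.pow_mem u_inv_mem _))
  have gen_mem : ∀ g, of' g ∈ S.M := by
    intro g
    cases g
    · rw [← hu]; exact u_mem
    · rw [← hh2]; exact h2_mem
    · rw [← hh]; exact S.h_mem
    · rw [← ht]; exact t_mem
  have gen_inv_mem : ∀ g, (of' g)⁻¹ ∈ S.M := by
    intro g
    cases g
    · rw [← hu]; exact u_inv_mem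
    · rw [← hh2]; exact h2_inv_mem
    · rw [← hh]; exact S.h_inv_mem
    · rw [← ht, tinv]; exact t_mem
  have all_mem : ∀ g : PresentedGroup (pslRels p j jb tb), g ∈ S.M := by
    intro g
    obtain ⟨w, rfl⟩ := PresentedGroup.mk_surjective _ g
    induction w using FreeGroup.induction_on with
    | C1 => rw [map_one]; exact S.M.one_mem
    | of x => exact gen_mem x
    | inv_of x _ => rw [map_inv]; exact gen_inv_mem x
    | mul x y hx hy => rw [map_mul]; exact S.M.mul_mem hx hy
  have inj : Function.Injective φ := by
    rw [injective_iff_map_eq_one]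
    intro g hg
    have hX : ∀ k : ℤ, ∃ X : (ZMod p)ˣ, J ^ k = X ∧ (X : ZMod p) = (j : ZMod p) ^ k :=
      fun k => ⟨J ^ k, rfl, by rw [Units.val_zpow_eq_zpow_val, hJ]⟩
    rcases S.mem_N_of_mem_M g (all_mem g) with ⟨a, k, rfl⟩ | ⟨a, b, k, rfl⟩
    · rw [map_mul, φP, φhk, ← map_mul, ← MonoidHom.mem_ker, QuotientGroup.ker_mk'] at hg
      obtain ⟨X, hX1, hX2⟩ := hX k
      rw [hX1] at hg
      obtain ⟨ha, h3⟩ := borel_center _ _ hg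
      have hz : (j : ZMod p) ^ k ≠ 0 := zpow_ne_zero _ (left_ne_zero_of_mul_eq_one hjb')
      rw [hX2] at h3
      have hk : (j : ZMod p) ^ k * (j : ZMod p) ^ k = 1 := by
        nth_rewrite 1 [← h3]
        exact inv_mul_cancel₀ hz
      rw [ha, S.P_zero, one_mul]
      exact S.h_zpow_eq_one k (mul_self_eq_one_iff.1 hk)
    · exfalso
      have φt' : φ S.t = QuotientGroup.mk' _ (slT _) := φt
      rw [map_mul, map_mul, map_mul, φP, φP, φhk, φt', ← map_mul, ← map_mul, ← map_mul,
        ← MonoidHom.mem_ker, QuotientGroup.ker_mk'] at hg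
      exact bigcell_center _ _ _ hg
  have surj : Function.Surjective φ := by
    intro y
    obtain ⟨g, rfl⟩ := QuotientGroup.mk'_surjective _ y
    have := sl_gen (φ.range.comap (QuotientGroup.mk' _)) (fun x => ⟨S.P x, φP x⟩) ⟨t, φt⟩
    have hg : g ∈ φ.range.comap (QuotientGroup.mk' _) := by rw [this]; trivial
    exact hg
  refine ⟨MulEquiv.ofBijective φ ⟨inj, surj⟩, slU 1, slD W, slD J, slT _, rfl, ?_, ?_, rfl,
    φof _, φof _, φof _, φof _⟩
  · rw [hWb, ← hW]; rfl
  · rw [hJb, ← hJ]; rfl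
end

section
/- There is a constant C such that for every prime p > 3 and every integer j with 1 ≤ j ≤ p − 1 whose residue generates (ℤ/pℤ)ˣ, each element of SL(2, F_p) can be written as a product of at most C·(1 + log₂ p) factors, each factor being one of the matrices u = [[1,1],[0,1]], h₂ = [[2⁻¹,0],[0,2]], h = [[j⁻¹,0],[0,j]], t = [[0,1],[−1,0]] (entries in F_p) or the inverse of one of these. -/
/-- `g` is a product of at most `n` elements of `S`. -/
def ShortWord {G : Type*} [Group G] (S : Set G) (n : ℕ) (g : G) : Prop :=
  ∃ l : List G, (∀ x ∈ l, x ∈ S) ∧ l.prod = g ∧ l.length ≤ n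

theorem ShortWord.mul {G : Type*} [Group G] {S : Set G} {m n : ℕ} {g h : G}
    (hg : ShortWord S m g) (hh : ShortWord S n h) : ShortWord S (m + n) (g * h) := by
  obtain ⟨l, h1, h2, h3⟩ := hg
  obtain ⟨k, h4, h5, h6⟩ := hh
  refine ⟨l ++ k, ?_, by simp [h2, h5], by simp; omega⟩
  intro x hx
  rcases List.mem_append.1 hx with hx | hx
  · exact h1 x hx
  · exact h4 x hx

theorem ShortWord.gen {G : Type*} [Group G] {S : Set G} {g : G} (hg : g ∈ S) :
    ShortWord S 1 g := ⟨[g], by simpa using hg, by simp, by simp⟩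

theorem ShortWord.one {G : Type*} [Group G] {S : Set G} : ShortWord S 0 (1 : G) :=
  ⟨[], by simp, by simp, by simp⟩

theorem ShortWord.mono {G : Type*} [Group G] {S : Set G} {m n : ℕ} {g : G}
    (hg : ShortWord S m g) (h : m ≤ n) : ShortWord S n g := by
  obtain ⟨l, h1, h2, h3⟩ := hg
  exact ⟨l, h1, h2, h3.trans h⟩

theorem ShortWord.pow {G : Type*} [Group G] {S : Set G} {g : G} (hg : g ∈ S) (n : ℕ) :
    ShortWord S n (g ^ n) := by
  induction n with
  | zero => simpa using ShortWord.one
  | succ k ih => rw [pow_succ]; exact ih.mul (ShortWord.gen hg)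

/-- The upper unipotent matrix with entry `x`. -/
def upperUnip {F : Type*} [Field F] (x : F) : Matrix.SpecialLinearGroup (Fin 2) F :=
  ⟨!![1, x; 0, 1], by simp⟩

theorem upperUnip_coe {F : Type*} [Field F] (x : F) :
    (upperUnip x : Matrix (Fin 2) (Fin 2) F) = !![1, x; 0, 1] := rfl

theorem upperUnip_add {F : Type*} [Field F] (x y : F) :
    upperUnip (x + y) = upperUnip x * upperUnip y := by
  ext i j
  fin_cases i <;> fin_cases j <;>
    simp [upperUnip_coe, Matrix.mul_apply, Fin.sum_univ_two, add_comm]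

theorem upperUnip_pow {F : Type*} [Field F] (n : ℕ) :
    (upperUnip (1 : F)) ^ n = upperUnip (n : F) := by
  induction n with
  | zero =>
    rw [pow_zero]
    ext i j
    fin_cases i <;> fin_cases j <;> simp [upperUnip_coe]
  | succ k ih => rw [pow_succ, ih, ← upperUnip_add]; push_cast; rfl

theorem shortWord_upperUnip {F : Type*} [Field F] (h2 : (2 : F) ≠ 0)
    (S : Set (Matrix.SpecialLinearGroup (Fin 2) F)) (D : Matrix.SpecialLinearGroup (Fin 2) F)
    (hD : (D : Matrix (Fin 2) (Fin 2) F) = !![(2 : F)⁻¹, 0; 0, 2])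
    (hU : upperUnip (1 : F) ∈ S) (hDS : D ∈ S) (hDS' : D⁻¹ ∈ S) (n : ℕ) :
    ∀ b : ℕ, b < 4 ^ n → ShortWord S (5 * n) (upperUnip (b : F)) := by
  induction n with
  | zero =>
    intro b hb
    have : b = 0 := by simpa using hb
    subst this
    rw [← upperUnip_pow]
    exact ShortWord.pow hU 0
  | succ n ih =>
    intro b hb
    have hq : b / 4 < 4 ^ n := by rw [pow_succ] at hb; omega
    have hr : b % 4 ≤ 3 := by omega
    have key : upperUnip (b : F) =
        D⁻¹ * upperUnip ((b / 4 : ℕ) : F) * D * upperUnip (1 : F) ^ (b % 4) := by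
      have hb' : (b : F) = 4 * ((b / 4 : ℕ) : F) + ((b % 4 : ℕ) : F) := by
        exact_mod_cast congrArg (Nat.cast (R := F)) (Nat.div_add_mod b 4).symm
      rw [upperUnip_pow, hb', upperUnip_add]
      congr 1
      rw [mul_assoc, eq_inv_mul_iff_mul_eq]
      generalize ((b / 4 : ℕ) : F) = q
      ext i j
      fin_cases i <;> fin_cases j <;>
        simp [upperUnip_coe, Matrix.mul_apply, Fin.sum_univ_two, hD]
      field_simp
      ring
    rw [key]
    exact ((((ShortWord.gen hDS').mul (ih _ hq)).mul (ShortWord.gen hDS)).mul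
      (ShortWord.pow hU _)).mono (by omega)

theorem shortWord_lowerNe {F : Type*} [Field F] (N : ℕ)
    (S : Set (Matrix.SpecialLinearGroup (Fin 2) F)) (T : Matrix.SpecialLinearGroup (Fin 2) F)
    (hT : (T : Matrix (Fin 2) (Fin 2) F) = !![0, 1; -1, 0])
    (hTS : T ∈ S) (hTS' : T⁻¹ ∈ S)
    (hE : ∀ x : F, ShortWord S N (upperUnip x))
    (g : Matrix.SpecialLinearGroup (Fin 2) F) (hc : g 1 0 ≠ 0) :
    ShortWord S (3 * N + 2) g := by
  have key : g = upperUnip ((g 0 0 - 1) / g 1 0) * (T⁻¹ * upperUnip (-(g 1 0)) * T) *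
      upperUnip ((g 1 1 - 1) / g 1 0) := by
    have hdet : g 0 0 * g 1 1 - g 0 1 * g 1 0 = 1 := by
      have := g.det_coe
      rwa [Matrix.det_fin_two] at this
    ext i j
    fin_cases i <;> fin_cases j <;>
      simp [upperUnip_coe, Matrix.mul_apply, Fin.sum_univ_two, hT, Matrix.adjugate_fin_two] <;>
      field_simp <;> first | ring1 | linear_combination -hdet
  rw [key]
  exact (((hE _).mul (((ShortWord.gen hTS').mul (hE _)).mul (ShortWord.gen hTS))).mul
    (hE _)).mono (by omega)

theorem shortWord_all {F : Type*} [Field F] (N : ℕ)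
    (S : Set (Matrix.SpecialLinearGroup (Fin 2) F)) (T : Matrix.SpecialLinearGroup (Fin 2) F)
    (hT : (T : Matrix (Fin 2) (Fin 2) F) = !![0, 1; -1, 0])
    (hTS : T ∈ S) (hTS' : T⁻¹ ∈ S)
    (hE : ∀ x : F, ShortWord S N (upperUnip x))
    (g : Matrix.SpecialLinearGroup (Fin 2) F) :
    ShortWord S (3 * N + 3) g := by
  by_cases hc : g 1 0 = 0
  · have hdet : g 0 0 * g 1 1 - g 0 1 * g 1 0 = 1 := by
      have := g.det_coe
      rwa [Matrix.det_fin_two] at this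
    have h1 : (T * g) 1 0 ≠ 0 := by
      simp [Matrix.mul_apply, Fin.sum_univ_two, hT]
      intro h
      simp [h, hc] at hdet
    have := (ShortWord.gen hTS').mul (shortWord_lowerNe N S T hT hTS hTS' hE _ h1)
    rw [inv_mul_cancel_left] at this
    exact this.mono (by omega)
  · exact (shortWord_lowerNe N S T hT hTS hTS' hE g hc).mono (by omega)

/-- There is a constant `C` such that for every prime `p > 3` and generator `j` of
`(ℤ/p)ˣ`, every element of `SL(2, 𝔽_p)` is a product of at most `C·(1 + log₂ p)` factors,
each being one of `u = [[1,1],[0,1]]`, `h₂ = [[2⁻¹,0],[0,2]]`, `h = [[j⁻¹,0],[0,j]]`,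
`t = [[0,1],[-1,0]]` or an inverse of one of these. -/
theorem SL2_short_words :
    ∃ C : ℝ, ∀ (p : ℕ), p.Prime → 3 < p →
      ∀ (j : ℕ), 1 ≤ j → j ≤ p - 1 →
        (∀ x : (ZMod p)ˣ, ∃ k : ℕ, (x : ZMod p) = (j : ZMod p) ^ k) →
        ∃ U H2 H T : Matrix.SpecialLinearGroup (Fin 2) (ZMod p),
          (U : Matrix (Fin 2) (Fin 2) (ZMod p)) = !![1, 1; 0, 1] ∧
          (H2 : Matrix (Fin 2) (Fin 2) (ZMod p)) = !![(2 : ZMod p)⁻¹, 0; 0, 2] ∧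
          (H : Matrix (Fin 2) (Fin 2) (ZMod p)) =
            !![((j : ZMod p))⁻¹, 0; 0, (j : ZMod p)] ∧
          (T : Matrix (Fin 2) (Fin 2) (ZMod p)) = !![0, 1; -1, 0] ∧
          ∀ g : Matrix.SpecialLinearGroup (Fin 2) (ZMod p),
            ∃ l : List (Matrix.SpecialLinearGroup (Fin 2) (ZMod p)),
              (∀ x ∈ l, x ∈ ({U, U⁻¹, H2, H2⁻¹, H, H⁻¹, T, T⁻¹} :
                Set (Matrix.SpecialLinearGroup (Fin 2) (ZMod p)))) ∧
              l.prod = g ∧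
              (l.length : ℝ) ≤ C * (1 + Real.logb 2 p) := by
  refine ⟨18, fun p hp hp3 j hj1 hjp _ => ?_⟩
  have : Fact p.Prime := ⟨hp⟩
  have h2 : (2 : ZMod p) ≠ 0 := by
    intro h
    have : ((2 : ℕ) : ZMod p) = 0 := by exact_mod_cast h
    rw [ZMod.natCast_eq_zero_iff] at this
    have := Nat.le_of_dvd (by norm_num) this
    omega
  have hj : (j : ZMod p) ≠ 0 := by
    intro h
    rw [ZMod.natCast_eq_zero_iff] at h
    have := Nat.le_of_dvd (by omega) h
    omega
  obtain ⟨D, hD⟩ : ∃ D : Matrix.SpecialLinearGroup (Fin 2) (ZMod p),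
      (D : Matrix (Fin 2) (Fin 2) (ZMod p)) = !![(2 : ZMod p)⁻¹, 0; 0, 2] :=
    ⟨⟨!![(2 : ZMod p)⁻¹, 0; 0, 2], by simp [h2]⟩, rfl⟩
  obtain ⟨H, hH⟩ : ∃ H : Matrix.SpecialLinearGroup (Fin 2) (ZMod p),
      (H : Matrix (Fin 2) (Fin 2) (ZMod p)) = !![((j : ZMod p))⁻¹, 0; 0, (j : ZMod p)] :=
    ⟨⟨!![((j : ZMod p))⁻¹, 0; 0, (j : ZMod p)], by simp [hj]⟩, rfl⟩
  obtain ⟨T, hT⟩ : ∃ T : Matrix.SpecialLinearGroup (Fin 2) (ZMod p),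
      (T : Matrix (Fin 2) (Fin 2) (ZMod p)) = !![0, 1; -1, 0] :=
    ⟨⟨!![0, 1; -1, 0], by simp⟩, rfl⟩
  refine ⟨upperUnip 1, D, H, T, rfl, hD, hH, hT, fun g => ?_⟩
  have hlt : p < 4 ^ (Nat.log 2 p + 1) :=
    (Nat.lt_pow_succ_log_self (by norm_num) p).trans_le (Nat.pow_le_pow_left (by norm_num) _)
  obtain ⟨l, hl1, hl2, hl3⟩ := shortWord_all (5 * (Nat.log 2 p + 1))
    ({upperUnip 1, (upperUnip 1)⁻¹, D, D⁻¹, H, H⁻¹, T, T⁻¹} :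
      Set (Matrix.SpecialLinearGroup (Fin 2) (ZMod p))) T hT
    (by simp) (by simp) (fun x => by
      rw [← ZMod.natCast_zmod_val x]
      exact shortWord_upperUnip h2 _ D hD (by simp) (by simp) (by simp) _ _
        ((ZMod.val_lt x).trans hlt)) g
  refine ⟨l, hl1, hl2, ?_⟩
  have h3 : (l.length : ℝ) ≤ 15 * (Nat.log 2 p + 1 : ℝ) + 3 := by
    have : l.length ≤ 15 * (Nat.log 2 p + 1) + 3 := by omega
    exact_mod_cast this
  have h4 : (Nat.log 2 p : ℝ) ≤ Real.logb 2 p := by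
    exact_mod_cast Real.natLog_le_logb p 2
  have h5 : (0 : ℝ) ≤ Nat.log 2 p := Nat.cast_nonneg _
  linarith
end

section
/- Let p > 3 be a prime, let j be an integer with 1 ≤ j ≤ p − 1 whose residue generates (ℤ/pℤ)ˣ, let j̄, 2̄ be the integers in [1, p] with j·j̄ ≡ 1 and 2·2̄ ≡ 1 (mod p), and let s be an integer with 1 ≤ s ≤ p − 1 whose residue is a non-square in (ℤ/pℤ)ˣ. Then the group presented by generators u, h₂, h, t, z subject to the fifteen relations: u^p = 1, u^{h₂} = u⁴, u^{h} = u^{j²}, t² = 1, h^t = h⁻¹, t = u·u^t·u, h₂·t = u^{2̄}·(u²)^t·u^{2̄}, h·t = u^{j̄}·(u^{j})^t·u^{j̄}, [z, u^t] = 1, [z, h] = 1, z² = 1, [z,t]³ = 1, ([z,t][z,u])² = 1, ([z,t][z,u^s])² = 1, and (zu)^{p+1} = 1, is isomorphic to the symmetric group S_{p+2}. -/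
/-- The commutator `[g,h] = g⁻¹h⁻¹gh`. -/
def pcomm {G : Type} [Group G] (g h : G) : G := g⁻¹ * h⁻¹ * g * h

/-- The five generators `u, h₂, h, t, z` of the presentation of `S_{p+2}`. -/
inductive SpGen : Type
  | u : SpGen
  | h2 : SpGen
  | h : SpGen
  | t : SpGen
  | z : SpGen

open FreeGroup in
/-- The fifteen relators of the presentation of `S_{p+2}`:
`u^p`, `u^{h₂} = u⁴`, `u^{h} = u^{j²}`, `t² = 1`, `h^t = h⁻¹`, `t = u·uᵗ·u`,
`h₂·t = u^{2̄}·(u²)ᵗ·u^{2̄}`, `h·t = u^{j̄}·(uʲ)ᵗ·u^{j̄}`, `[z, uᵗ] = 1`, `[z, h] = 1`,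
`z² = 1`, `[z,t]³ = 1`, `([z,t][z,u])² = 1`, `([z,t][z,uˢ])² = 1`, `(zu)^{p+1} = 1`. -/
def spRels (p j jb tb s : ℕ) : Set (FreeGroup SpGen) :=
  { of SpGen.u ^ p,
    (of SpGen.h2)⁻¹ * of SpGen.u * of SpGen.h2 * (of SpGen.u ^ 4)⁻¹,
    (of SpGen.h)⁻¹ * of SpGen.u * of SpGen.h * (of SpGen.u ^ (j ^ 2))⁻¹,
    of SpGen.t ^ 2,
    (of SpGen.t)⁻¹ * of SpGen.h * of SpGen.t * of SpGen.h,
    of SpGen.u * ((of SpGen.t)⁻¹ * of SpGen.u * of SpGen.t) * of SpGen.u *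
      (of SpGen.t)⁻¹,
    of SpGen.u ^ tb * ((of SpGen.t)⁻¹ * of SpGen.u ^ 2 * of SpGen.t) *
      of SpGen.u ^ tb * (of SpGen.h2 * of SpGen.t)⁻¹,
    of SpGen.u ^ jb * ((of SpGen.t)⁻¹ * of SpGen.u ^ j * of SpGen.t) *
      of SpGen.u ^ jb * (of SpGen.h * of SpGen.t)⁻¹,
    pcomm (of SpGen.z) ((of SpGen.t)⁻¹ * of SpGen.u * of SpGen.t),
    pcomm (of SpGen.z) (of SpGen.h),
    of SpGen.z ^ 2,
    pcomm (of SpGen.z) (of SpGen.t) ^ 3,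
    (pcomm (of SpGen.z) (of SpGen.t) * pcomm (of SpGen.z) (of SpGen.u)) ^ 2,
    (pcomm (of SpGen.z) (of SpGen.t) * pcomm (of SpGen.z) (of SpGen.u ^ s)) ^ 2,
    (of SpGen.z * of SpGen.u) ^ (p + 1) }



namespace SpProof

section Abstract

variable {G : Type} [Group G]

/-- braid relation -/
def Br (x y : G) : Prop := x * y * x = y * x * y

/-- the commutation relation -/
def Cm (x y w : G) : Prop := x * y * x * w = w * (x * y * x)

theorem Br.symm {x y : G} (h : Br x y) : Br y x := Eq.symm h

theorem Br.conj {x y : G} (h : Br x y) (g : G) : Br (g⁻¹ * x * g) (g⁻¹ * y * g) := by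
  unfold Br at *
  calc _ = g⁻¹ * (x * y * x) * g := by group
    _ = g⁻¹ * (y * x * y) * g := by rw [h]
    _ = _ := by group

theorem Cm.conj {x y w : G} (h : Cm x y w) (g : G) :
    Cm (g⁻¹ * x * g) (g⁻¹ * y * g) (g⁻¹ * w * g) := by
  unfold Cm at *
  calc _ = g⁻¹ * (x * y * x * w) * g := by group
    _ = g⁻¹ * (w * (x * y * x)) * g := by rw [h]
    _ = _ := by group

theorem Cm.swap12 {x y w : G} (h : Cm x y w) (hb : Br x y) : Cm y x w := by
  unfold Cm Br at *
  rw [← hb, h]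

theorem Cm.swap23 {x y w : G} (h : Cm x y w) (hx : x * x = 1) : Cm x w y := by
  unfold Cm at *
  calc x * w * x * y = x * w * x * y * (x * x) := by rw [hx, mul_one]
    _ = x * (w * (x * y * x)) * x := by group
    _ = x * (x * y * x * w) * x := by rw [h]
    _ = (x * x) * (y * (x * w * x)) := by group
    _ = _ := by rw [hx, one_mul]

/-- Cardinality bound for a group generated by star transpositions. -/
theorem star_bound {X : Type} [DecidableEq X] (Z : X → G) (h2 : ∀ x, Z x * Z x = 1)
    (hb : ∀ x y, x ≠ y → Br (Z x) (Z y))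
    (hc : ∀ x y w, x ≠ y → x ≠ w → y ≠ w → Cm (Z x) (Z y) (Z w)) (S : Finset X) :
    ((Subgroup.closure (Z '' S) : Subgroup G) : Set G).Finite ∧
    ((Subgroup.closure (Z '' S) : Subgroup G) : Set G).ncard ≤ (S.card + 1).factorial := by
  induction S using Finset.induction_on with
  | empty => simp
  | insert a S ha ih =>
    obtain ⟨ihf, ihc⟩ := ih
    set K : Subgroup G := Subgroup.closure (Z '' S) with hK
    have hZK : ∀ x ∈ S, Z x ∈ K := fun x hx => Subgroup.subset_closure ⟨x, hx, rfl⟩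
    have hinv : ∀ x, (Z x)⁻¹ = Z x := fun x => inv_eq_of_mul_eq_one_right (h2 x)
    let R : Set G := insert 1 (insert (Z a) ((fun x => Z a * Z x) '' (S : Set X)))
    have hRf : R.Finite := ((S.finite_toSet.image _).insert _).insert _
    have hRc : R.ncard ≤ S.card + 2 := by
      refine (Set.ncard_insert_le _ _).trans ?_
      have := Set.ncard_insert_le (Z a) ((fun x => Z a * Z x) '' (S : Set X))
      have h3 := Set.ncard_image_le (f := fun x => Z a * Z x) S.finite_toSet
      rw [Set.ncard_coe_finset] at h3
      omega
    let M : Set G := (fun q : G × G => q.1 * q.2) '' ((K : Set G) ×ˢ R)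
    have hMf : M.Finite := (ihf.prod hRf).image _
    have hMc : M.ncard ≤ (S.card + 1).factorial * (S.card + 2) := by
      refine (Set.ncard_image_le (ihf.prod hRf)).trans ?_
      rw [Set.ncard_prod]
      exact Nat.mul_le_mul ihc hRc
    have hmem : ∀ k ∈ K, ∀ r ∈ R, k * r ∈ M := fun k hk r hr => ⟨(k, r), ⟨hk, hr⟩, rfl⟩
    have R1 : (1 : G) ∈ R := by simp [R]
    have Ra : Z a ∈ R := by simp [R]
    have Rx : ∀ x ∈ S, Z a * Z x ∈ R := fun x hx => by
      right; right; exact ⟨x, hx, rfl⟩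
    have key : ∀ m ∈ M, ∀ y ∈ insert a S, m * Z y ∈ M := by
      rintro _ ⟨⟨k, r⟩, ⟨hk, hr⟩, rfl⟩ y hy
      simp only at hk hr ⊢
      have hk' : k ∈ K := hk
      rw [Finset.mem_insert] at hy
      rcases hr with rfl | rfl | ⟨x, hx, rfl⟩
      · rcases hy with rfl | hy
        · rw [mul_one]; exact hmem _ hk _ Ra
        · have := hmem _ (K.mul_mem hk' (hZK y hy)) _ R1
          simpa using this
      · rcases hy with rfl | hy
        · rw [mul_assoc, h2]; exact hmem _ hk _ R1
        · rw [mul_assoc]; exact hmem _ hk _ (Rx y hy)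
      · have hx' : x ∈ S := hx
        have hax : a ≠ x := fun h => ha (h ▸ hx')
        rcases hy with rfl | hy
        · have e : k * (Z y * Z x) * Z y = k * Z x * (Z y * Z x) := by
            have := hb _ _ hax
            unfold Br at this
            calc _ = k * (Z y * Z x * Z y) := by group
              _ = k * (Z x * Z y * Z x) := by rw [this]
              _ = _ := by group
          rw [e]
          exact hmem _ (K.mul_mem hk' (hZK x hx')) _ (Rx x hx')
        · by_cases hxy : x = y
          · subst hxy
            have : k * (Z a * Z x) * Z x = k * Z a := by
              rw [← mul_assoc, mul_assoc _ (Z x) (Z x), h2, mul_one]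
            rw [this]; exact hmem _ hk _ Ra
          · have hay : a ≠ y := fun h => ha (h ▸ hy)
            have e : k * (Z a * Z x) * Z y = k * Z x * Z y * Z x * (Z a * Z x) := by
              have := hc x a y hax.symm hxy hay
              unfold Cm at this
              calc k * (Z a * Z x) * Z y = k * (Z x * Z x) * (Z a * Z x) * Z y := by
                    rw [h2, mul_one]
                _ = k * Z x * (Z x * Z a * Z x * Z y) := by group
                _ = k * Z x * (Z y * (Z x * Z a * Z x)) := by rw [this]
                _ = _ := by group
            rw [e]
            exact hmem _ (K.mul_mem (K.mul_mem (K.mul_mem hk' (hZK x hx')) (hZK y hy))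
              (hZK x hx')) _ (Rx x hx')
    have hsub : ((Subgroup.closure (Z '' (insert a S : Finset X)) : Subgroup G) : Set G) ⊆ M := by
      intro g hg
      have hg' : g ∈ Subgroup.closure (Z '' (insert a S : Finset X)) := hg
      induction hg' using Subgroup.closure_induction_right with
      | one => have := hmem 1 K.one_mem 1 R1; simpa using this
      | mul_right m _ y hy ih =>
        obtain ⟨y, hy, rfl⟩ := hy
        exact key _ (ih (by assumption)) y (by exact_mod_cast hy)
      | mul_inv_cancel m _ y hy ih =>
        obtain ⟨y, hy, rfl⟩ := hy
        rw [hinv]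
        exact key _ (ih (by assumption)) y (by exact_mod_cast hy)
    refine ⟨hMf.subset hsub, (Set.ncard_le_ncard hsub hMf).trans (hMc.trans ?_)⟩
    rw [Finset.card_insert_of_notMem ha, Nat.factorial_succ (S.card + 1), mul_comm]

variable {p : ℕ} [hpf : Fact p.Prime] (u t h z : G)

/-- powers of `u` indexed by residues. -/
def U (p : ℕ) (u : G) (x : ZMod p) : G := u ^ x.val

/-- the conjugates of `z` -/
def Z (p : ℕ) (u t z : G) : Option (ZMod p) → G
  | none => t⁻¹ * z * t
  | some x => (U p u x)⁻¹ * z * U p u x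

variable {u t h z}

theorem U_nat (hu : u ^ p = 1) (n : ℕ) : U p u (n : ZMod p) = u ^ n := by
  unfold U
  rw [ZMod.val_natCast]
  exact (pow_eq_pow_mod n hu).symm

theorem U_add (hu : u ^ p = 1) (x y : ZMod p) : U p u (x + y) = U p u x * U p u y := by
  unfold U
  rw [ZMod.val_add, ← pow_add]
  exact (pow_eq_pow_mod _ hu).symm

theorem U_zero : U p u 0 = 1 := by simp [U]

theorem U_neg (hu : u ^ p = 1) (x : ZMod p) : U p u (-x) = (U p u x)⁻¹ := by
  rw [eq_inv_iff_mul_eq_one, ← U_add hu, neg_add_cancel, U_zero]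

theorem U_conj (hu : u ^ p = 1) {j : ℕ} (hh : h⁻¹ * u * h = u ^ (j ^ 2)) (x : ZMod p) :
    h⁻¹ * U p u x * h = U p u ((j : ZMod p) ^ 2 * x) := by
  obtain ⟨n, rfl⟩ : ∃ n : ℕ, (n : ZMod p) = x := ⟨x.val, by simp⟩
  have : (j : ZMod p) ^ 2 * (n : ZMod p) = ((j ^ 2 * n : ℕ) : ZMod p) := by push_cast; ring
  rw [this, U_nat hu, U_nat hu, pow_mul, ← hh]
  have := conj_pow (a := h⁻¹) (b := u) (i := n)
  rw [inv_inv] at this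
  exact this.symm

theorem U_conj' (hu : u ^ p = 1) {j : ℕ} (hj : (j : ZMod p) ≠ 0)
    (hh : h⁻¹ * u * h = u ^ (j ^ 2)) (x : ZMod p) :
    h * U p u x * h⁻¹ = U p u (((j : ZMod p) ^ 2)⁻¹ * x) := by
  have := U_conj hu hh (((j : ZMod p) ^ 2)⁻¹ * x)
  rw [← mul_assoc, mul_inv_cancel₀ (pow_ne_zero _ hj), one_mul] at this
  rw [← this]; group

theorem R_pow (hu : u ^ p = 1) {j : ℕ} (hj : (j : ZMod p) ≠ 0)
    (hh : h⁻¹ * u * h = u ^ (j ^ 2)) (ht : t * t = 1) (hht : t * h * t = h⁻¹)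
    (h1 : u * t * u * t * u = t)
    (hjr : U p u (j : ZMod p)⁻¹ * t * U p u (j : ZMod p) * t * U p u (j : ZMod p)⁻¹ = h * t)
    (n : ℕ) : U p u ((j : ZMod p) ^ n)⁻¹ * t * U p u ((j : ZMod p) ^ n) * t *
      U p u ((j : ZMod p) ^ n)⁻¹ = h ^ n * t := by
  have hth : h * t = t * h⁻¹ := by
    rw [← hht]; calc h * t = (t * t) * h * t := by rw [ht, one_mul]
      _ = _ := by group
  have hth' : t * h⁻¹ = h * t := hth.symm
  have step : ∀ (x : ZMod p) (n : ℕ),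
      U p u x⁻¹ * t * U p u x * t * U p u x⁻¹ = h ^ n * t →
      U p u ((j : ZMod p) ^ 2 * x)⁻¹ * t * U p u ((j : ZMod p) ^ 2 * x) * t *
        U p u ((j : ZMod p) ^ 2 * x)⁻¹ = h ^ (n + 2) * t := by
    intro x n hx
    rw [mul_inv, ← U_conj' hu hj hh, ← U_conj hu hh]
    calc _ = h * U p u x⁻¹ * (h⁻¹ * (t * h⁻¹) * U p u x * (h * t) * h) * U p u x⁻¹ * h⁻¹ := by
          group
      _ = h * U p u x⁻¹ * (h⁻¹ * (h * t) * U p u x * (t * h⁻¹) * h) * U p u x⁻¹ * h⁻¹ := by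
          rw [← hth]
      _ = h * (U p u x⁻¹ * t * U p u x * t * U p u x⁻¹) * h⁻¹ := by group
      _ = h * h ^ n * (t * h⁻¹) := by rw [hx]; group
      _ = h * h ^ n * (h * t) := by rw [hth']
      _ = _ := by rw [pow_add, pow_two]; simp only [← mul_assoc]
                  congr 2; rw [← pow_succ', ← pow_succ]
  induction n using Nat.twoStepInduction with
  | zero =>
    have e : U p u (1 : ZMod p) = u := by
      have := U_nat (p := p) hu 1; simpa using this
    simp only [pow_zero, inv_one, e, one_mul]; exact h1
  | one => simpa using hjr
  | more n ih _ =>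
    have := step _ _ ih
    rwa [← pow_add, add_comm 2 n] at this

end Abstract
end SpProof

namespace SpProof

section Upper

variable {G : Type} [Group G] {p : ℕ} [hpf : Fact p.Prime] {u t h z : G}

theorem Z_conj_U (hu : u ^ p = 1) (x y : ZMod p) :
    Z p u t z (some (x + y)) = (U p u y)⁻¹ * Z p u t z (some x) * U p u y := by
  simp only [Z, U_add hu]; group

theorem comm_conj {a b : G} (hab : a * b = b * a) : b⁻¹ * a * b = a := by
  rw [mul_assoc, hab]; group

theorem Z_conj_U_none (ht : t * t = 1) (hz : z * (t * u * t) = t * u * t * z)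
    (y : ZMod p) :
    Z p u t z none = (U p u y)⁻¹ * Z p u t z none * U p u y := by
  have ti : t⁻¹ = t := inv_eq_of_mul_eq_one_right ht
  have hc : Commute z (t * u * t) := hz
  have hc2 : Commute (t * z * t) u := by
    show t * z * t * u = u * (t * z * t)
    calc _ = t * z * t * u * (t * t) := by rw [ht, mul_one]
      _ = t * (z * (t * u * t)) * t := by group
      _ = t * (t * u * t * z) * t := by rw [hz]
      _ = (t * t) * u * t * z * t := by group
      _ = _ := by rw [ht]; group
  simp only [Z, ti]
  exact (comm_conj (hc2.pow_right y.val).eq).symm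

theorem Z_conj_t_none (ht : t * t = 1) :
    Z p u t z (some 0) = t⁻¹ * Z p u t z none * t := by
  have ti : t⁻¹ = t := inv_eq_of_mul_eq_one_right ht
  simp only [Z, U_zero, ti]
  calc _ = (1 : G) * z * 1 := by simp
    _ = (t * t) * z * (t * t) := by rw [ht]
    _ = _ := by group

theorem Z_conj_t_zero : Z p u t z none = t⁻¹ * Z p u t z (some 0) * t := by
  simp [Z, U_zero]

theorem Z_conj_t {j : ℕ} (hu : u ^ p = 1) (ht : t * t = 1) (hht : t * h * t = h⁻¹)
    (hz : z * (t * u * t) = t * u * t * z) (hzh : z * h = h * z)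
    (hR : ∀ n : ℕ, U p u ((j : ZMod p) ^ n)⁻¹ * t * U p u ((j : ZMod p) ^ n) * t *
      U p u ((j : ZMod p) ^ n)⁻¹ = h ^ n * t)
    (hjgen : ∀ x : ZMod p, x ≠ 0 → ∃ k : ℕ, x = (j : ZMod p) ^ k)
    (x : ZMod p) (hx : x ≠ 0) :
    Z p u t z (some (-x⁻¹)) = t⁻¹ * Z p u t z (some x) * t := by
  have ti : t⁻¹ = t := inv_eq_of_mul_eq_one_right ht
  obtain ⟨n, rfl⟩ := hjgen x hx
  have hR := hR n
  set x := (j : ZMod p) ^ n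
  have hc : Commute z (h ^ n) := (show Commute z h from hzh).pow_right n
  have hzt : ∀ y, t⁻¹ * z * t = (U p u y)⁻¹ * (t⁻¹ * z * t) * U p u y :=
    fun y => Z_conj_U_none ht hz y
  have e1 : U p u x * t = t * (U p u x⁻¹)⁻¹ * h ^ n * t * (U p u x⁻¹)⁻¹ := by
    have : h ^ n = U p u x⁻¹ * t * U p u x * t * U p u x⁻¹ * t := by
      rw [hR, mul_assoc, ht, mul_one]
    rw [this]
    calc U p u x * t = (t * t) * U p u x * t := by rw [ht, one_mul]
      _ = t * (t * U p u x * t) := by group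
      _ = t * (t * U p u x * t * U p u x⁻¹ * (t * t) * (U p u x⁻¹)⁻¹) := by rw [ht]; group
      _ = _ := by group
  have e2 : U p u (-x⁻¹) = (U p u x⁻¹)⁻¹ := U_neg hu _
  simp only [Z]
  rw [e2]
  calc _ = U p u x⁻¹ * z * (U p u x⁻¹)⁻¹ := by group
    _ = U p u x⁻¹ * ((h ^ n * t)⁻¹ * (t⁻¹ * z * t) * (h ^ n * t)) * (U p u x⁻¹)⁻¹ := by
        congr 2
        have hn : h ^ n * t = t * (h ^ n)⁻¹ := by
          rw [← inv_pow, ← hht]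
          have := conj_pow (a := t) (b := h) (i := n)
          rw [ti] at this
          rw [this]
          calc h ^ n * t = (t * t) * h ^ n * t := by rw [ht, one_mul]
            _ = _ := by group
        rw [hn]
        calc z = z * (h ^ n * (h ^ n)⁻¹) := by group
          _ = (h ^ n * z) * (h ^ n)⁻¹ := by rw [← hc.eq]; group
          _ = h ^ n * ((t * t)⁻¹ * z * (t * t)) * (h ^ n)⁻¹ := by rw [ht]; group
          _ = _ := by group
    _ = U p u x⁻¹ * ((h ^ n * t)⁻¹ * ((U p u (-x⁻¹))⁻¹ * (t⁻¹ * z * t) * (U p u (-x⁻¹))) *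
          (h ^ n * t)) * (U p u x⁻¹)⁻¹ := by rw [← hzt]
    _ = (t * (U p u x⁻¹)⁻¹ * h ^ n * t * (U p u x⁻¹)⁻¹)⁻¹ * z *
         (t * (U p u x⁻¹)⁻¹ * h ^ n * t * (U p u x⁻¹)⁻¹) := by rw [e2]; group
    _ = (U p u x * t)⁻¹ * z * (U p u x * t) := by rw [← e1]
    _ = _ := by group

theorem Z_conj_h {j : ℕ} (hu : u ^ p = 1) (hh : h⁻¹ * u * h = u ^ (j ^ 2))
    (hzh : z * h = h * z) (x : ZMod p) :
    Z p u t z (some ((j : ZMod p) ^ 2 * x)) = h⁻¹ * Z p u t z (some x) * h := by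
  simp only [Z]
  rw [← U_conj hu hh]
  calc _ = h⁻¹ * (U p u x)⁻¹ * (h * z) * h⁻¹ * U p u x * h := by group
    _ = _ := by rw [← hzh]; group

theorem Z_conj_h_none (ht : t * t = 1) (hht : t * h * t = h⁻¹) (hzh : z * h = h * z) :
    Z p u t z none = h⁻¹ * Z p u t z none * h := by
  have ti : t⁻¹ = t := inv_eq_of_mul_eq_one_right ht
  have hth : t * h = h⁻¹ * t := by
    rw [← hht, mul_assoc, ht, mul_one]
  have hth2 : h⁻¹ * t = t * h := hth.symm
  simp only [Z, ti]
  calc t * z * t = t * (z * h) * h⁻¹ * t := by group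
    _ = (t * h) * z * (h⁻¹ * t) := by rw [hzh]; group
    _ = (h⁻¹ * t) * z * (t * h) := by rw [← hth]
    _ = _ := by group

/-- All braid relations. -/
theorem all_braid {Y : Option (ZMod p) → G}
    (hU : ∀ x y : ZMod p, ∃ g : G, Y none = g⁻¹ * Y none * g ∧
      (∀ w : ZMod p, Y (some (w + y)) = g⁻¹ * Y (some w) * g) ∧ x = x)
    (hT : ∃ g : G, Y none = g⁻¹ * Y (some 0) * g ∧ Y (some 0) = g⁻¹ * Y none * g ∧
      ∀ x : ZMod p, x ≠ 0 → Y (some (-x⁻¹)) = g⁻¹ * Y (some x) * g)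
    (h0 : Br (Y (some 0)) (Y none)) (a b : Option (ZMod p)) (hab : a ≠ b) :
    Br (Y a) (Y b) := by
  have A1 : ∀ x : ZMod p, Br (Y (some x)) (Y none) := by
    intro x
    obtain ⟨g, g1, g2, -⟩ := hU 0 x
    have := h0.conj g
    rwa [← g1, ← g2, zero_add] at this
  have A2 : ∀ x : ZMod p, x ≠ 0 → Br (Y (some x)) (Y (some 0)) := by
    intro x hx
    obtain ⟨g, g1, g2, g3⟩ := hT
    have := (A1 (-x⁻¹)).conj g
    rw [← g2, ← g3 _ (by simpa using hx)] at this
    simpa using this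
  have A3 : ∀ x y : ZMod p, x ≠ y → Br (Y (some x)) (Y (some y)) := by
    intro x y hxy
    obtain ⟨g, g1, g2, -⟩ := hU 0 y
    have := (A2 (x - y) (sub_ne_zero.2 hxy)).conj g
    rw [← g2, ← g2] at this
    simpa using this
  cases a with
  | none => cases b with
    | none => exact absurd rfl hab
    | some y => exact (A1 y).symm
  | some x => cases b with
    | none => exact A1 x
    | some y => exact A3 x y (fun h => hab (by rw [h]))

/-- All commutation relations. -/
theorem all_comm {Y : Option (ZMod p) → G} (h2 : ∀ x, Y x * Y x = 1)
    (hb : ∀ x y, x ≠ y → Br (Y x) (Y y))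
    (hU : ∀ x y : ZMod p, ∃ g : G, Y none = g⁻¹ * Y none * g ∧
      (∀ w : ZMod p, Y (some (w + y)) = g⁻¹ * Y (some w) * g) ∧ x = x)
    (hT : ∃ g : G, Y none = g⁻¹ * Y (some 0) * g ∧ Y (some 0) = g⁻¹ * Y none * g ∧
      ∀ x : ZMod p, x ≠ 0 → Y (some (-x⁻¹)) = g⁻¹ * Y (some x) * g)
    (h0 : ∀ x : ZMod p, x ≠ 0 → Cm (Y (some 0)) (Y none) (Y (some x)))
    (a b c : Option (ZMod p)) (hab : a ≠ b) (hac : a ≠ c) (hbc : b ≠ c) :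
    Cm (Y a) (Y b) (Y c) := by
  have A1 : ∀ x y : ZMod p, x ≠ y → Cm (Y (some x)) (Y none) (Y (some y)) := by
    intro x y hxy
    obtain ⟨g, g1, g2, -⟩ := hU 0 x
    have := (h0 (y - x) (sub_ne_zero.2 hxy.symm)).conj g
    rw [← g1, ← g2, ← g2] at this
    simpa using this
  have A2 : ∀ x y : ZMod p, x ≠ 0 → y ≠ 0 → x ≠ y →
      Cm (Y (some x)) (Y (some 0)) (Y (some y)) := by
    intro x y hx hy hxy
    obtain ⟨g, g1, g2, g3⟩ := hT
    have := (A1 (-x⁻¹) (-y⁻¹) (by simpa using hxy)).conj g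
    rw [← g2, ← g3 _ (by simpa using hx), ← g3 _ (by simpa using hy)] at this
    simpa using this
  have A3 : ∀ x y w : ZMod p, x ≠ y → w ≠ y → x ≠ w →
      Cm (Y (some x)) (Y (some y)) (Y (some w)) := by
    intro x y w hxy hwy hxw
    obtain ⟨g, g1, g2, -⟩ := hU 0 y
    have := (A2 (x - y) (w - y) (sub_ne_zero.2 hxy) (sub_ne_zero.2 hwy)
      (fun h => hxw (sub_left_injective h))).conj g
    rw [← g2, ← g2, ← g2] at this
    simpa using this
  cases a with
  | none => cases b with
    | none => exact absurd rfl hab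
    | some y => cases c with
      | none => exact absurd rfl hac
      | some w => exact (A1 y w (fun h => hbc (by rw [h]))).swap12 (hb _ _ hab.symm)
  | some x => cases b with
    | none => cases c with
      | none => exact absurd rfl hbc
      | some w => exact A1 x w (fun h => hac (by rw [h]))
    | some y => cases c with
      | none => exact (A1 x y (fun h => hab (by rw [h]))).swap23 (h2 _)
      | some w => exact A3 x y w (fun h => hab (by rw [h])) (fun h => hbc (by rw [h]))
                    (fun h => hac (by rw [h]))

theorem upper {h2 : G} {j jb tb s : ℕ}
    (hj : (j : ZMod p) ≠ 0)
    (hjgen : ∀ x : ZMod p, x ≠ 0 → ∃ k : ℕ, x = (j : ZMod p) ^ k)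
    (hjb : (j : ZMod p)⁻¹ = (jb : ZMod p))
    (hs : ¬ IsSquare ((s : ZMod p)))
    (hgen : Subgroup.closure ({u, h2, h, t, z} : Set G) = ⊤)
    (r1 : u ^ p = 1) (r3 : h⁻¹ * u * h = u ^ (j ^ 2)) (r4 : t ^ 2 = 1)
    (r5 : t⁻¹ * h * t * h = 1) (r6 : u * (t⁻¹ * u * t) * u = t)
    (r7 : u ^ tb * (t⁻¹ * u ^ 2 * t) * u ^ tb = h2 * t)
    (r8 : u ^ jb * (t⁻¹ * u ^ j * t) * u ^ jb = h * t)
    (r9 : pcomm z (t⁻¹ * u * t) = 1) (r10 : pcomm z h = 1) (r11 : z ^ 2 = 1)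
    (r12 : pcomm z t ^ 3 = 1) (r13 : (pcomm z t * pcomm z u) ^ 2 = 1)
    (r14 : (pcomm z t * pcomm z (u ^ s)) ^ 2 = 1) (r15 : (z * u) ^ (p + 1) = 1) :
    Finite G ∧ Nat.card G ≤ (p + 2).factorial := by
  have ht : t * t = 1 := by rw [← pow_two, r4]
  have ti : t⁻¹ = t := inv_eq_of_mul_eq_one_right ht
  have hzz : z * z = 1 := by rw [← pow_two, r11]
  have zi : z⁻¹ = z := inv_eq_of_mul_eq_one_right hzz
  have hht : t * h * t = h⁻¹ := by
    rw [ti] at r5; exact eq_inv_of_mul_eq_one_left r5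
  have pc : ∀ a b : G, pcomm a b = 1 → a * b = b * a := by
    intro a b hab
    unfold pcomm at hab
    calc a * b = b * a * (a⁻¹ * b⁻¹ * a * b) := by group
      _ = _ := by rw [hab, mul_one]
  have hz : z * (t * u * t) = t * u * t * z := by
    have := pc _ _ r9; rwa [ti] at this
  have hzh : z * h = h * z := pc _ _ r10
  have h1 : u * t * u * t * u = t := by
    rw [ti] at r6; simpa [mul_assoc] using r6
  have hjr : U p u (j : ZMod p)⁻¹ * t * U p u (j : ZMod p) * t * U p u (j : ZMod p)⁻¹ = h * t := by
    rw [hjb, U_nat r1, U_nat r1, ← r8, ti]; group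
  have hR := R_pow r1 hj r3 ht hht h1 hjr
  set Y := Z p u t z with hY
  have U1 : U p u (1 : ZMod p) = u := by
    have := U_nat (p := p) r1 1; simpa using this
  have Y0 : Y (some 0) = z := by simp [hY, Z, U_zero]
  have Yn : Y none = t⁻¹ * z * t := rfl
  have Ys : ∀ n : ℕ, Y (some (n : ZMod p)) = (u ^ n)⁻¹ * z * u ^ n := by
    intro n; simp [hY, Z, U_nat r1]
  have Y1 : Y (some 1) = u⁻¹ * z * u := by
    have := Ys 1; simpa using this
  have hUn : ∀ y, Y none = (U p u y)⁻¹ * Y none * U p u y := Z_conj_U_none ht hz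
  have hUs : ∀ y w, Y (some (w + y)) = (U p u y)⁻¹ * Y (some w) * U p u y :=
    fun y w => Z_conj_U r1 w y
  have hTn : Y none = t⁻¹ * Y (some 0) * t := Z_conj_t_zero
  have hT0 : Y (some 0) = t⁻¹ * Y none * t := Z_conj_t_none ht
  have hTs : ∀ x : ZMod p, x ≠ 0 → Y (some (-x⁻¹)) = t⁻¹ * Y (some x) * t :=
    Z_conj_t r1 ht hht hz hzh hR hjgen
  have hU : ∀ x y : ZMod p, ∃ g : G, Y none = g⁻¹ * Y none * g ∧
      (∀ w : ZMod p, Y (some (w + y)) = g⁻¹ * Y (some w) * g) ∧ x = x :=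
    fun x y => ⟨U p u y, hUn y, hUs y, rfl⟩
  have hT : ∃ g : G, Y none = g⁻¹ * Y (some 0) * g ∧ Y (some 0) = g⁻¹ * Y none * g ∧
      ∀ x : ZMod p, x ≠ 0 → Y (some (-x⁻¹)) = g⁻¹ * Y (some x) * g := ⟨t, hTn, hT0, hTs⟩
  have hinvol : ∀ x, Y x * Y x = 1 := by
    have : ∀ g : G, (g⁻¹ * z * g) * (g⁻¹ * z * g) = 1 := by
      intro g
      calc _ = g⁻¹ * (z * z) * g := by group
        _ = 1 := by rw [hzz]; group
    intro x
    cases x with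
    | none => exact this _
    | some x => exact this _
  have hinv : ∀ x, (Y x)⁻¹ = Y x := fun x => inv_eq_of_mul_eq_one_right (hinvol x)
  have hb0 : Br (Y (some 0)) (Y none) := by
    have e : pcomm z t = Y (some 0) * Y none := by
      rw [Y0, Yn]; unfold pcomm; rw [zi]; group
    rw [e] at r12
    unfold Br
    calc _ = (Y (some 0) * Y none) ^ 3 * (Y none)⁻¹ * (Y (some 0))⁻¹ * (Y none)⁻¹ := by
          simp only [pow_succ, pow_zero, one_mul]; group
      _ = _ := by rw [r12, hinv, hinv, one_mul]
  have hbr := all_braid hU hT hb0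
  have cm_of : ∀ a b c : G, b * b = 1 → a * a = 1 → c * c = 1 →
      (a * b * (a * c)) ^ 2 = 1 → Cm a b c := by
    intro a b c hb ha hc hh
    unfold Cm
    rw [pow_two] at hh
    have e := eq_inv_of_mul_eq_one_left hh
    have ai : a⁻¹ = a := inv_eq_of_mul_eq_one_right ha
    have bi : b⁻¹ = b := inv_eq_of_mul_eq_one_right hb
    have ci : c⁻¹ = c := inv_eq_of_mul_eq_one_right hc
    simp only [mul_inv_rev, ai, bi, ci] at e
    simpa [mul_assoc] using e
  have hc1 : Cm (Y (some 0)) (Y none) (Y (some 1)) := by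
    apply cm_of _ _ _ (hinvol _) (hinvol _) (hinvol _)
    rw [← r13, Y0, Yn, Y1]; unfold pcomm; rw [zi]; congr 1; group
  have hcs : Cm (Y (some 0)) (Y none) (Y (some (s : ZMod p))) := by
    apply cm_of _ _ _ (hinvol _) (hinvol _) (hinvol _)
    rw [← r14, Y0, Yn, Ys]; unfold pcomm; rw [zi]; congr 1; group
  have hcj : ∀ (k : ℕ) (x : ZMod p), Cm (Y (some 0)) (Y none) (Y (some x)) →
      Cm (Y (some 0)) (Y none) (Y (some (((j : ZMod p) ^ k) ^ 2 * x))) := by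
    intro k x hx
    induction k with
    | zero => simpa using hx
    | succ k ih =>
      have hhs : ∀ x, Y (some ((j : ZMod p) ^ 2 * x)) = h⁻¹ * Y (some x) * h :=
        Z_conj_h r1 r3 hzh
      have hhn : Y none = h⁻¹ * Y none * h := Z_conj_h_none ht hht hzh
      have := ih.conj h
      rw [← hhs, ← hhs, ← hhn, mul_zero] at this
      convert this using 3
      ring
  have hc0 : ∀ x : ZMod p, x ≠ 0 → Cm (Y (some 0)) (Y none) (Y (some x)) := by
    intro x hx
    have hs0 : (s : ZMod p) ≠ 0 := fun h => hs (by rw [h]; exact IsSquare.zero)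
    by_cases hsq : IsSquare x
    · obtain ⟨y, rfl⟩ := hsq
      obtain ⟨k, rfl⟩ := hjgen y (fun h => hx (by rw [h, mul_zero]))
      have := hcj k 1 hc1
      convert this using 3
      ring
    · obtain ⟨a, ha⟩ := hjgen x hx
      obtain ⟨b, hb⟩ := hjgen _ hs0
      have hao : Odd a := by
        rw [← Nat.not_even_iff_odd]
        rintro ⟨c, rfl⟩; exact hsq ⟨(j : ZMod p) ^ c, by rw [ha, pow_add]⟩
      have hbo : Odd b := by
        rw [← Nat.not_even_iff_odd]
        rintro ⟨c, rfl⟩; exact hs ⟨(j : ZMod p) ^ c, by rw [hb, pow_add]⟩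
      obtain ⟨c, hc⟩ := hao.add_odd hbo
      have hxs : x * s = ((j : ZMod p) ^ c) ^ 2 := by
        rw [ha, hb, ← pow_add, hc]; ring
      obtain ⟨k, hk⟩ := hjgen ((j : ZMod p) ^ c * (s : ZMod p)⁻¹)
        (mul_ne_zero (pow_ne_zero _ hj) (inv_ne_zero hs0))
      have := hcj k _ hcs
      convert this using 3
      rw [← hk, mul_pow, ← hxs]
      field_simp
  have hcm := all_comm hinvol hbr hU hT hc0
  obtain ⟨bf, bc⟩ := star_bound Y hinvol hbr hcm Finset.univ
  set N : Subgroup G := Subgroup.closure (Y '' ((Finset.univ : Finset (Option (ZMod p))) : Set _))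
    with hN
  have hYN : ∀ x, Y x ∈ N := fun x => Subgroup.subset_closure ⟨x, by simp, rfl⟩
  have hnorm : ∀ g : G, (∀ x, g * Y x * g⁻¹ ∈ N) → (∀ n ∈ N, g * n * g⁻¹ ∈ N) := by
    intro g hg n hn
    have : N ≤ N.comap (MulAut.conj g).toMonoidHom := by
      rw [hN, Subgroup.closure_le]
      rintro _ ⟨x, -, rfl⟩
      exact hg x
    simpa using this hn
  have hmemn : ∀ g : G, (∀ x, g * Y x * g⁻¹ ∈ N) → (∀ x, g⁻¹ * Y x * g ∈ N) →
      g ∈ Subgroup.normalizer (N : Set G) := by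
    intro g h1 h2
    rw [Subgroup.mem_normalizer_iff]
    intro n
    refine ⟨hnorm g h1 n, fun hn => ?_⟩
    have := hnorm g⁻¹ (by simpa using h2) _ hn
    simpa [mul_assoc] using this
  have hun : u ∈ Subgroup.normalizer (N : Set G) := by
    have e1 := fun x => hUs 1 x
    have e2 := hUn 1
    rw [U1] at e2
    simp only [U1] at e1
    apply hmemn
    · intro x
      cases x with
      | none =>
        rw [e2]
        have : u * (u⁻¹ * Y none * u) * u⁻¹ = Y none := by group
        rw [this]; exact hYN _
      | some x =>
        have e := e1 (x - 1)
        rw [sub_add_cancel] at e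
        rw [e]
        have : u * (u⁻¹ * Y (some (x - 1)) * u) * u⁻¹ = Y (some (x - 1)) := by group
        rw [this]; exact hYN _
    · intro x
      cases x with
      | none => rw [← e2]; exact hYN _
      | some x => rw [← e1]; exact hYN _
  have htn : t ∈ Subgroup.normalizer (N : Set G) := by
    have : ∀ x, t⁻¹ * Y x * t ∈ N := by
      intro x
      cases x with
      | none => rw [← hT0]; exact hYN _
      | some x =>
        by_cases hx : x = 0
        · subst hx; rw [← hTn]; exact hYN _
        · rw [← hTs x hx]; exact hYN _
    apply hmemn
    · simpa only [ti] using this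
    · exact this
  have hzn : z ∈ Subgroup.normalizer (N : Set G) := by
    apply Subgroup.le_normalizer
    rw [← Y0]; exact hYN _
  have htop : Subgroup.normalizer (N : Set G) = ⊤ := by
    set M := Subgroup.normalizer (N : Set G)
    have hht : h * t ∈ M := by
      rw [← r8]
      exact M.mul_mem (M.mul_mem (M.pow_mem hun _) (M.mul_mem (M.mul_mem (M.inv_mem htn)
        (M.pow_mem hun _)) htn)) (M.pow_mem hun _)
    have hh2t : h2 * t ∈ M := by
      rw [← r7]
      exact M.mul_mem (M.mul_mem (M.pow_mem hun _) (M.mul_mem (M.mul_mem (M.inv_mem htn)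
        (M.pow_mem hun _)) htn)) (M.pow_mem hun _)
    rw [eq_top_iff, ← hgen, Subgroup.closure_le]
    rintro g (rfl | rfl | rfl | rfl | rfl)
    · exact hun
    · exact (M.mul_mem_cancel_right htn).1 hh2t
    · exact (M.mul_mem_cancel_right htn).1 hht
    · exact htn
    · exact hzn
  have hNn : N.Normal := Subgroup.normalizer_eq_top_iff.1 htop
  have hNtop : N = ⊤ := by
    have mk : ∀ g : G, (QuotientGroup.mk' N) g = 1 ↔ g ∈ N := by
      intro g; simp
    set π := QuotientGroup.mk' N
    have pz : π z = 1 := (mk z).2 (by rw [← Y0]; exact hYN _)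
    have pu : π u = 1 := by
      have e := congrArg π r15
      have e2 := congrArg π r1
      simp only [map_pow, map_mul, pz, one_mul, map_one] at e e2
      rwa [pow_succ, e2, one_mul] at e
    have pt : π t = 1 := by
      have e := congrArg π r6
      simp only [map_mul, map_inv, pu, mul_one, inv_mul_cancel] at e
      exact e.symm
    have ph2 : π h2 = 1 := by
      have e := congrArg π r7
      simp only [map_mul, map_pow, map_inv, pu, pt, one_pow, mul_one, inv_one] at e
      exact e.symm
    have ph : π h = 1 := by
      have e := congrArg π r8
      simp only [map_mul, map_pow, map_inv, pu, pt, one_pow, mul_one, inv_one] at e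
      exact e.symm
    rw [eq_top_iff, ← hgen, Subgroup.closure_le]
    rintro g (rfl | rfl | rfl | rfl | rfl)
    · exact (mk _).1 pu
    · exact (mk _).1 ph2
    · exact (mk _).1 ph
    · exact (mk _).1 pt
    · exact (mk _).1 pz
  rw [hNtop] at bf bc
  rw [Subgroup.coe_top] at bf bc
  refine ⟨Set.finite_univ_iff.1 bf, ?_⟩
  rw [Set.ncard_univ] at bc
  simpa [ZMod.card] using bc

end Upper
end SpProof

namespace SpProof

section Lower

open Equiv

variable {p : ℕ} [hpf : Fact p.Prime]

/-- translation -/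
def Us (c : ZMod p) : Perm (Option (ZMod p)) := Equiv.optionCongr (Equiv.subRight c)

/-- scaling -/
def Hs (d : ZMod p) (hd : d ≠ 0) : Perm (Option (ZMod p)) :=
  Equiv.optionCongr (Equiv.mulLeft₀ d hd)

/-- the underlying function of inversion -/
def Tf : Option (ZMod p) → Option (ZMod p)
  | none => some 0
  | some x => if x = 0 then none else some (-x⁻¹)

theorem Tf_invol (x : Option (ZMod p)) : Tf (Tf x) = x := by
  cases x with
  | none => simp [Tf]
  | some x => by_cases hx : x = 0 <;> simp [Tf, hx]

/-- inversion -/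
def T : Perm (Option (ZMod p)) := ⟨Tf, Tf, Tf_invol, Tf_invol⟩

/-- extension by a fixed point -/
def E {α : Type} : Perm α →* Perm (Option α) where
  toFun f := Equiv.optionCongr f
  map_one' := by ext x; cases x <;> simp
  map_mul' f g := by ext x; cases x <;> simp

theorem Us_none (c : ZMod p) : Us c none = none := rfl
theorem Us_some (c x : ZMod p) : Us c (some x) = some (x - c) := rfl
theorem Hs_none (d : ZMod p) (hd : d ≠ 0) : Hs d hd none = none := rfl
theorem Hs_some (d : ZMod p) (hd : d ≠ 0) (x : ZMod p) : Hs d hd (some x) = some (d * x) := rfl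
theorem T_none : T (none : Option (ZMod p)) = some 0 := rfl
theorem T_zero : T (some 0 : Option (ZMod p)) = none := by
  show Tf (some 0 : Option (ZMod p)) = _
  simp [Tf]
theorem T_some {x : ZMod p} (hx : x ≠ 0) : T (some x) = some (-x⁻¹) := by
  show Tf (some x) = _
  simp [Tf, hx]

theorem T_mul_T : (T * T : Perm (Option (ZMod p))) = 1 := by
  apply Equiv.ext; intro x; exact Tf_invol x

theorem T_inv : (T⁻¹ : Perm (Option (ZMod p))) = T := inv_eq_of_mul_eq_one_right T_mul_T

theorem Us_mul (b c : ZMod p) : Us b * Us c = Us (c + b) := by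
  apply Equiv.ext; intro x
  cases x with
  | none => rfl
  | some x => simp [Perm.mul_apply, Us_some, sub_sub]

theorem Us_zero : Us (0 : ZMod p) = 1 := by
  apply Equiv.ext; intro x
  cases x with
  | none => rfl
  | some x => simp [Us_some]

theorem Us_pow (n : ℕ) : Us (1 : ZMod p) ^ n = Us (n : ZMod p) := by
  induction n with
  | zero => simp [Us_zero]
  | succ n ih => rw [pow_succ, ih, Us_mul]; push_cast; rw [add_comm]

theorem Us_inv (c : ZMod p) : (Us c)⁻¹ = Us (-c) := by
  apply inv_eq_of_mul_eq_one_right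
  rw [Us_mul, neg_add_cancel, Us_zero]

theorem UH (d c : ZMod p) (hd : d ≠ 0) : Us 1 * Hs d hd = Hs d hd * Us c ↔ d * c = 1 := by
  constructor
  · intro h
    have := congrArg (fun f : Perm (Option (ZMod p)) => f (some 0)) h
    simp [Perm.mul_apply, Us_some, Hs_some] at this
    exact this.symm
  · intro h
    apply Equiv.ext; intro x
    cases x with
    | none => rfl
    | some x => simp [Perm.mul_apply, Us_some, Hs_some, mul_sub, h]

theorem TH (d : ZMod p) (hd : d ≠ 0) : T * Hs d hd * T * Hs d hd = 1 := by
  apply Equiv.ext; intro x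
  cases x with
  | none => simp [Perm.mul_apply, Hs_none, Hs_some, T_none, T_zero]
  | some x =>
    by_cases hx : x = 0
    · simp [Perm.mul_apply, Hs_none, Hs_some, T_none, T_zero, hx]
    · have h1 : d * x ≠ 0 := mul_ne_zero hd hx
      have h2 : d * -(d * x)⁻¹ ≠ 0 := mul_ne_zero hd (neg_ne_zero.2 (inv_ne_zero h1))
      simp only [Perm.mul_apply, Hs_some, T_some h1, T_some h2, Perm.one_apply]
      congr 1
      field_simp

theorem UTU (b c : ZMod p) (hbc : c * b = 1) (hd : b ^ 2 ≠ 0) :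
    Us b * (T⁻¹ * Us c * T) * Us b = Hs (b ^ 2) hd * T := by
  rw [T_inv]
  have hb : b ≠ 0 := by rintro rfl; simp at hbc
  have hc : c ≠ 0 := by rintro rfl; simp at hbc
  have hcb : c = b⁻¹ := eq_inv_of_mul_eq_one_left hbc
  subst hcb
  apply Equiv.ext; intro x
  simp only [Perm.mul_apply]
  cases x with
  | none =>
    have : (0 : ZMod p) - b⁻¹ ≠ 0 := by simpa using hb
    simp only [Us_none, T_none, Us_some, T_some this, Hs_some]
    simp
  | some x =>
    by_cases hx : x = 0
    · subst hx
      have : (0 : ZMod p) - b ≠ 0 := by simpa using hb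
      simp only [Us_some, T_some this, T_zero, Hs_none]
      have e : -(0 - b)⁻¹ - b⁻¹ = 0 := by simp
      rw [e, T_zero, Us_none]
    · by_cases hxb : x = b
      · subst hxb
        simp only [Us_some, sub_self, T_zero, Us_none, T_none, T_some hx, Hs_some]
        congr 1; field_simp; simp
      · have h1 : x - b ≠ 0 := sub_ne_zero.2 hxb
        have e : -(x - b)⁻¹ - b⁻¹ = -(x / (b * (x - b))) := by field_simp; ring
        have h2 : -(x - b)⁻¹ - b⁻¹ ≠ 0 := by
          rw [e]; exact neg_ne_zero.2 (div_ne_zero hx (mul_ne_zero hb h1))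
        simp only [Us_some, T_some h1, T_some h2, T_some hx, Hs_some]
        congr 1
        rw [e]
        field_simp
        ring

/-- the extra transposition -/
def zz : Perm (Option (Option (ZMod p))) := swap none (some (some 0))

theorem E_none {α : Type} (f : Perm α) : E f none = none := rfl
theorem E_some {α : Type} (f : Perm α) (x : α) : E f (some x) = some (f x) := rfl

theorem zz_conj (f : Perm (Option (ZMod p))) :
    (E f)⁻¹ * zz * E f = swap none (some (f⁻¹ (some 0))) := by
  unfold zz
  have := Equiv.swap_apply_apply ((E f)⁻¹) none (some (some 0))
  rw [inv_inv] at this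
  rw [← this, ← map_inv, E_none, E_some]

theorem zz_sq : (zz * zz : Perm (Option (Option (ZMod p)))) = 1 := swap_mul_self _ _

theorem zz_inv : (zz⁻¹ : Perm (Option (Option (ZMod p)))) = zz := swap_inv _ _

theorem zz_pcomm (f : Perm (Option (ZMod p))) :
    pcomm zz (E f) = zz * swap none (some (f⁻¹ (some 0))) := by
  rw [← zz_conj]; unfold pcomm; rw [zz_inv]; group

theorem zz_pcomm_one (f : Perm (Option (ZMod p))) (hf : f (some 0) = some 0) :
    pcomm zz (E f) = 1 := by
  have : f⁻¹ (some 0) = some 0 := by rw [Perm.inv_eq_iff_eq, hf]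
  rw [zz_pcomm, this]; exact zz_sq

theorem zz_three (f : Perm (Option (ZMod p))) (hf : f (some 0) ≠ some 0) :
    pcomm zz (E f) ^ 3 = 1 := by
  have : f⁻¹ (some 0) ≠ some 0 := by
    intro h; rw [Perm.inv_eq_iff_eq] at h; exact hf h.symm
  rw [zz_pcomm]
  have h3 : (zz * swap none (some (f⁻¹ (some 0)))).IsThreeCycle :=
    Equiv.Perm.isThreeCycle_swap_mul_swap_same (by simp) (by simp)
      (by simpa using this.symm)
  rw [← h3.orderOf]; exact pow_orderOf_eq_one _

theorem zz_two (f g : Perm (Option (ZMod p))) (hf : f⁻¹ (some 0) ≠ some 0)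
    (hg : g⁻¹ (some 0) ≠ some 0) (hfg : f⁻¹ (some 0) ≠ g⁻¹ (some 0)) :
    (pcomm zz (E f) * pcomm zz (E g)) ^ 2 = 1 := by
  rw [zz_pcomm, zz_pcomm]
  set a := f⁻¹ (some 0)
  set b := g⁻¹ (some 0)
  have e : zz * swap none (some a) * zz = swap (some (some 0)) (some a) := by
    have := Equiv.swap_apply_apply zz none (some a)
    rw [zz_inv] at this
    rw [← this]
    unfold zz
    rw [swap_apply_left, swap_apply_of_ne_of_ne (by simp) (by simpa using hf)]
  have e2 : zz * swap none (some a) * (zz * swap none (some b)) =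
      swap (some (some 0)) (some a) * swap none (some b) := by
    rw [← e]; group
  rw [e2, pow_two]
  have c := Equiv.mul_swap_eq_swap_mul (swap (some (some 0)) (some a)) none (some b)
  rw [swap_apply_of_ne_of_ne (by simp) (by simp), swap_apply_of_ne_of_ne (by simpa using hg)
    (by simpa using hfg.symm)] at c
  nth_rewrite 2 [c]
  rw [mul_assoc, ← mul_assoc (swap none (some b)), swap_mul_self, one_mul, swap_mul_self]

theorem zu_pow : (zz * E (Us (1 : ZMod p))) ^ (p + 1) = 1 := by
  set w := zz * E (Us (1 : ZMod p)) with hw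
  have w_none : w none = some (some 0) := by
    simp [hw, Perm.mul_apply, E_none, zz]
  have w_some : ∀ x : ZMod p, x ≠ 1 → w (some (some x)) = some (some (x - 1)) := by
    intro x hx
    rw [hw, Perm.mul_apply, E_some, Us_some, zz, swap_apply_of_ne_of_ne (by simp)]
    simpa [sub_eq_zero] using hx
  have w_one : w (some (some 1)) = none := by
    simp [hw, Perm.mul_apply, E_some, Us_some, zz]
  have w_inf : w (some none) = some none := by
    rw [hw, Perm.mul_apply, E_some, Us_none, zz, swap_apply_of_ne_of_ne (by simp) (by simp)]
  have hk : ∀ k : ℕ, k < p → (w ^ (k + 1)) none = some (some (-(k : ZMod p))) := by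
    intro k
    induction k with
    | zero => intro _; simpa using w_none
    | succ k ih =>
      intro hk
      rw [pow_succ', Perm.mul_apply, ih (by omega), w_some]
      · congr 2; push_cast; ring
      · intro h
        have h0 : ((k + 1 : ℕ) : ZMod p) = 0 := by
          push_cast; rw [← h]; ring
        rw [ZMod.natCast_eq_zero_iff] at h0
        exact absurd (Nat.le_of_dvd (by omega) h0) (by omega)
  have hp := hpf.out.pos
  have hn : (w ^ (p + 1)) none = none := by
    have := hk (p - 1) (by omega)
    rw [Nat.sub_add_cancel hp] at this
    rw [pow_succ', Perm.mul_apply, this, Nat.cast_sub hp]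
    simpa using w_one
  apply Equiv.ext
  intro x
  rw [Perm.one_apply]
  match x with
  | none => exact hn
  | some none =>
    have : ∀ n : ℕ, (w ^ n) (some none) = some none := by
      intro n
      induction n with
      | zero => rfl
      | succ n ih => rw [pow_succ, Perm.mul_apply, w_inf, ih]
    exact this _
  | some (some x) =>
    have hx : (w ^ ((-x).val + 1)) none = some (some x) := by
      rw [hk _ (ZMod.val_lt _)]; simp
    rw [← hx, ← Perm.mul_apply, ← pow_add, add_comm, pow_add, Perm.mul_apply, hn]

theorem gen_top (H : Subgroup (Perm (Option (Option (ZMod p))))) (hu : E (Us 1) ∈ H)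
    (ht : E T ∈ H) (hz : zz ∈ H) : H = ⊤ := by
  have c : ∀ f : Perm (Option (ZMod p)), E f ∈ H → swap none (some (f⁻¹ (some 0))) ∈ H := by
    intro f hf
    rw [← zz_conj]
    exact H.mul_mem (H.mul_mem (H.inv_mem hf) hz) hf
  have c1 : ∀ x : Option (ZMod p), swap none (some x) ∈ H := by
    intro x
    cases x with
    | none =>
      have := c T ht
      rwa [T_inv, T_zero] at this
    | some x =>
      have := c (Us 1 ^ x.val) (by rw [map_pow]; exact H.pow_mem hu _)
      rw [Us_pow, Us_inv, Us_some] at this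
      simpa using this
  have c2 : ∀ x y : Option (ZMod p), x ≠ y → swap (some x) (some y) ∈ H := by
    intro x y hxy
    have e : swap none (some x) * swap none (some y) * swap none (some x)
        = swap (some x) (some y) := by
      have := Equiv.swap_apply_apply (swap none (some x)) none (some y)
      rw [swap_inv] at this
      rw [← this, swap_apply_left, swap_apply_of_ne_of_ne (by simp) (by simpa using hxy.symm)]
    rw [← e]
    exact H.mul_mem (H.mul_mem (c1 _) (c1 _)) (c1 _)
  rw [eq_top_iff, ← Equiv.Perm.closure_isSwap, Subgroup.closure_le]
  rintro _ ⟨x, y, hxy, rfl⟩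
  show swap x y ∈ H
  cases x with
  | none => cases y with
    | none => exact absurd rfl hxy
    | some y => exact c1 y
  | some x => cases y with
    | none => rw [swap_comm]; exact c1 x
    | some y => exact c2 x y (fun h => hxy (by rw [h]))

end Lower
end SpProof

theorem SpProof.upper_hom {G : Type} [Group G] {p : ℕ} [Fact p.Prime] {j jb tb s : ℕ}
    (hj : (j : ZMod p) ≠ 0)
    (hjgen : ∀ x : ZMod p, x ≠ 0 → ∃ k : ℕ, x = (j : ZMod p) ^ k)
    (hjb : (j : ZMod p)⁻¹ = (jb : ZMod p))
    (hs : ¬ IsSquare ((s : ZMod p))) (π : FreeGroup SpGen →* G)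
    (rel : ∀ r ∈ spRels p j jb tb s, π r = 1)
    (hgen : Subgroup.closure ({π (FreeGroup.of SpGen.u), π (FreeGroup.of SpGen.h2),
      π (FreeGroup.of SpGen.h), π (FreeGroup.of SpGen.t), π (FreeGroup.of SpGen.z)} : Set G) = ⊤) :
    Finite G ∧ Nat.card G ≤ (p + 2).factorial := by
  simp only [spRels, Set.mem_insert_iff, Set.mem_singleton_iff, forall_eq_or_imp,
    forall_eq] at rel
  simp only [pcomm, map_mul, map_pow, map_inv, mul_inv_eq_one] at rel
  obtain ⟨r1, r2, r3, r4, r5, r6, r7, r8, r9, r10, r11, r12, r13, r14, r15⟩ := rel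
  exact SpProof.upper (p := p) (j := j) (jb := jb) (tb := tb) (s := s) hj hjgen
    hjb hs hgen r1 r3 r4 r5 r6 r7 r8 r9 r10 r11 r12 r13 r14 r15

/-- For a prime `p > 3`, a generator `j` of `(ℤ/p)ˣ` with inverses `j̄, 2̄` of `j, 2`
modulo `p`, and a non-square `s` modulo `p`, the group presented by `u, h₂, h, t, z`
subject to the fifteen relations of `spRels` is isomorphic to the symmetric group
`S_{p+2}`. -/
theorem presentation_of_symmetric_p_plus_two
    (p : ℕ) (hp : p.Prime) (hp3 : 3 < p)
    (j : ℕ) (hj1 : 1 ≤ j) (hjp : j ≤ p - 1)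
    (hjgen : ∀ x : (ZMod p)ˣ, ∃ k : ℕ, (x : ZMod p) = (j : ZMod p) ^ k)
    (jb : ℕ) (hjb1 : 1 ≤ jb) (hjbp : jb ≤ p) (hjb : (j * jb) % p = 1)
    (tb : ℕ) (htb1 : 1 ≤ tb) (htbp : tb ≤ p) (htb : (2 * tb) % p = 1)
    (s : ℕ) (hs1 : 1 ≤ s) (hsp : s ≤ p - 1) (hs : ¬ IsSquare ((s : ZMod p))) :
    Nonempty (PresentedGroup (spRels p j jb tb s) ≃* Equiv.Perm (Fin (p + 2))) := by
  haveI : Fact p.Prime := ⟨hp⟩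
  have hj0 : (j : ZMod p) ≠ 0 := by
    rw [Ne, ZMod.natCast_eq_zero_iff]
    intro h; exact absurd (Nat.le_of_dvd hj1 h) (by omega)
  have cast1 : ∀ a b : ℕ, (a * b) % p = 1 → (a : ZMod p) * (b : ZMod p) = 1 := by
    intro a b hab
    have : ((a * b : ℕ) : ZMod p) = ((1 : ℕ) : ZMod p) := by
      rw [ZMod.natCast_eq_natCast_iff, Nat.ModEq, hab, Nat.mod_eq_of_lt hp.one_lt]
    push_cast at this; exact this
  have hjb' := cast1 _ _ hjb
  have htb' := cast1 _ _ htb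
  have hjgen' : ∀ x : ZMod p, x ≠ 0 → ∃ k : ℕ, x = (j : ZMod p) ^ k :=
    fun x hx => hjgen (Units.mk0 x hx)
  have hs0 : (s : ZMod p) ≠ 0 := fun h => hs (by rw [h]; exact IsSquare.zero)
  have hjb0 : (jb : ZMod p) ^ 2 ≠ 0 := pow_ne_zero _ (by intro h; simp [h] at hjb')
  have htb0 : (tb : ZMod p) ^ 2 ≠ 0 := pow_ne_zero _ (by intro h; simp [h] at htb')
  have hup : Finite (PresentedGroup (spRels p j jb tb s)) ∧
      Nat.card (PresentedGroup (spRels p j jb tb s)) ≤ (p + 2).factorial := by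
    refine SpProof.upper_hom hj0 hjgen' (inv_eq_of_mul_eq_one_right hjb') hs
      (PresentedGroup.mk (spRels p j jb tb s)) (fun r hr => PresentedGroup.one_of_mem hr) ?_
    rw [eq_top_iff, ← PresentedGroup.closure_range_of, Subgroup.closure_le]
    rintro _ ⟨g, rfl⟩
    apply Subgroup.subset_closure
    cases g
    · left; rfl
    · right; left; rfl
    · right; right; left; rfl
    · right; right; right; left; rfl
    · right; right; right; right; rfl
  let F : SpGen → Equiv.Perm (Option (Option (ZMod p))) := fun g =>
    match g with
    | SpGen.u => SpProof.E (SpProof.Us 1)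
    | SpGen.h2 => SpProof.E (SpProof.Hs ((tb : ZMod p) ^ 2) htb0)
    | SpGen.h => SpProof.E (SpProof.Hs ((jb : ZMod p) ^ 2) hjb0)
    | SpGen.t => SpProof.E SpProof.T
    | SpGen.z => SpProof.zz
  have Fu : F SpGen.u = SpProof.E (SpProof.Us 1) := rfl
  have Fh2 : F SpGen.h2 = SpProof.E (SpProof.Hs ((tb : ZMod p) ^ 2) htb0) := rfl
  have Fh : F SpGen.h = SpProof.E (SpProof.Hs ((jb : ZMod p) ^ 2) hjb0) := rfl
  have Ft : F SpGen.t = SpProof.E SpProof.T := rfl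
  have Fz : F SpGen.z = SpProof.zz := rfl
  have hpc : ∀ a b : FreeGroup SpGen,
      FreeGroup.lift F (pcomm a b) = pcomm (FreeGroup.lift F a) (FreeGroup.lift F b) := by
    intro a b; simp [pcomm]
  have hF : ∀ r ∈ spRels p j jb tb s, FreeGroup.lift F r = 1 := by
    simp only [spRels, Set.mem_insert_iff, Set.mem_singleton_iff, forall_eq_or_imp, forall_eq]
    simp only [hpc, map_mul, map_pow, map_inv, FreeGroup.lift_apply_of, Fu, Fh2, Fh, Ft, Fz]
    simp only [← map_mul, ← map_pow, ← map_inv]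
    simp only [SpProof.Us_pow]
    have T0 : (SpProof.T⁻¹ : Equiv.Perm (Option (ZMod p))) (some 0) = none := by
      rw [SpProof.T_inv, SpProof.T_zero]
    have Uinv : ∀ c : ZMod p, (SpProof.Us c)⁻¹ (some 0) = some c := by
      intro c; rw [SpProof.Us_inv, SpProof.Us_some]; simp
    have H1 : SpProof.Hs ((1 : ZMod p) ^ 2) (by simp) = 1 := by
      apply Equiv.ext; intro x
      cases x with
      | none => rfl
      | some x => rw [SpProof.Hs_some]; simp
    refine ⟨?_, ?_, ?_, ?_, ?_, ?_, ?_, ?_, ?_, ?_, ?_, ?_, ?_, ?_, ?_⟩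
    · rw [ZMod.natCast_self, SpProof.Us_zero, map_one]
    · have := (SpProof.UH ((tb : ZMod p) ^ 2) ((4 : ℕ) : ZMod p) htb0).2 (by
        have : ((4 : ℕ) : ZMod p) = ((2 : ℕ) : ZMod p) ^ 2 := by push_cast; norm_num
        rw [this, ← mul_pow, mul_comm, htb', one_pow])
      rw [mul_assoc _ (SpProof.Us 1), this]; simp
    · have := (SpProof.UH ((jb : ZMod p) ^ 2) ((j ^ 2 : ℕ) : ZMod p) hjb0).2 (by
        push_cast
        rw [← mul_pow, mul_comm, hjb', one_pow])
      rw [mul_assoc _ (SpProof.Us 1), this]; simp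
    · rw [pow_two, SpProof.T_mul_T, map_one]
    · rw [SpProof.T_inv, SpProof.TH, map_one]
    · rw [SpProof.UTU 1 1 (by simp) (by simp), H1]; simp
    · rw [SpProof.UTU _ _ htb' htb0]; simp
    · rw [SpProof.UTU _ _ hjb' hjb0]; simp
    · apply SpProof.zz_pcomm_one
      rw [SpProof.T_inv, Equiv.Perm.mul_apply, Equiv.Perm.mul_apply, SpProof.T_zero,
        SpProof.Us_none, SpProof.T_none]
    · apply SpProof.zz_pcomm_one
      rw [SpProof.Hs_some, mul_zero]
    · rw [pow_two, SpProof.zz_sq]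
    · apply SpProof.zz_three
      rw [SpProof.T_zero]; simp
    · apply SpProof.zz_two
      · rw [T0]; simp
      · rw [Uinv]; simp
      · rw [T0, Uinv]; simp
    · apply SpProof.zz_two
      · rw [T0]; simp
      · rw [Uinv]; simpa using hs0
      · rw [T0, Uinv]; simp
    · exact SpProof.zu_pow
  let Φ := PresentedGroup.toGroup hF
  have hΦ : ∀ g, Φ (PresentedGroup.of g) = F g := fun g => PresentedGroup.toGroup.of hF
  have hsurj : Function.Surjective Φ := by
    rw [← MonoidHom.range_eq_top]
    apply SpProof.gen_top
    · exact ⟨_, hΦ SpGen.u⟩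
    · exact ⟨_, hΦ SpGen.t⟩
    · exact ⟨_, hΦ SpGen.z⟩
  haveI := hup.1
  have hcard : Fintype.card (Option (Option (ZMod p))) = p + 2 := by
    simp [ZMod.card]
  have hbij : Function.Bijective Φ := by
    apply hsurj.bijective_of_nat_card_le
    rw [Nat.card_perm, Nat.card_eq_fintype_card (α := Option (Option (ZMod p))), hcard]
    exact hup.2
  exact ⟨(MulEquiv.ofBijective Φ hbij).trans
    (Equiv.permCongrHom (Fintype.equivFinOfCardEq hcard))⟩
end
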